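/- Let I = (L(u,v)) be a lexsegment edge ideal in S = K[x_1,…,x_n]. Then the arithmetical rank of I equals the projective dimension of S/I over S, i.e., ara(I) = projdim_S(S/I). -/

import Mathlib

/-!
Write `u = (a, b)` and `v = (c, d)`. Both invariants are equal to the number `N` given by

* `d - b + 1` if `a = c` (a star);
* `(n - b + 1) + (d - c)` if `c = a + 1` and `d < b` (two disjoint stars);
* `n - a` if `a < c` and either `b ≤ c`, or `b = c + 1` and `d = n` (the graph on `a, …, n` contains
  a complete join of two nonempty parts);
* `n - a - 1` otherwise.

Lower bounds. A projective resolution of `S/I` of length `r`, and the Koszul complex of `r` elements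
of `I` generating it up to radical, are both instances of a `TorsionRes I r`: a complex of `r + 1`
projective modules with an augmentation onto `S/I`, whose homology is killed by powers of the
elements of `I`. So it suffices to bound `r` below for these. `TorsionRes.obstruction` does so: a
Koszul cocycle modulo `I` on the variables indexed by `W` is lifted step by step through the
complex, powers of monomials in `I` absorbing the torsion; after `r + 1` steps the lift is zero, and
the exactness of the Koszul complex of (powers of) the variables `W` then shows that the cocycle was
a coboundary modulo `I`, up to powers. Applied to suitable cocycles this gives `#W ≤ r` when every
vertex of `W` has a neighbour in an independent set (`card_le_of_independent`), and `#W ≤ r + 1` when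
the graph contains a complete join with vertex set `W` (`card_le_of_join`).

Upper bound for the arithmetical rank. The generators are distributed over `N` levels such that the
Schmitt–Vogel lemma `schmittVogel` applies; the level functions are in the lemmas `generators_*`.

Upper bound for the projective dimension. The sequences `0 → S/(J : x_v) → S/J → S/(J + (x_v)) → 0`,
for ideals `J` generated by variables and by edges of a graph, reduce the bound to graphs with fewer
vertices (`pdLE_gIdeal_step`); the cases are the lemmas `pdLE_*`. By `exists_res` a bound on the
projective dimension in terms of `Ext` gives a resolution of that length.
-/

open MvPolynomial

/-- The variable `x_i` (1-based indexing) of `K[x_1,…,x_n]`. -/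
noncomputable def xv (K : Type) [Field K] (n i : ℕ) : MvPolynomial (Fin n) K :=
  if h : i - 1 < n then MvPolynomial.X ⟨i - 1, h⟩ else 0

/-- `lexGE p q` : for sorted index pairs, the squarefree degree-2 monomial
`x_{p.1} x_{p.2}` is greater than or equal to `x_{q.1} x_{q.2}` in the
lexicographic order induced by `x_1 > x_2 > ⋯ > x_n`. -/
def lexGE (p q : ℕ × ℕ) : Prop := p.1 < q.1 ∨ (p.1 = q.1 ∧ p.2 ≤ q.2)

/-- Strict lexicographic comparison of sorted index pairs. -/
def lexGT (p q : ℕ × ℕ) : Prop := p.1 < q.1 ∨ (p.1 = q.1 ∧ p.2 < q.2)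

/-- Sorted index pairs in range `1,…,n`; these correspond exactly to the
squarefree monomials of degree 2 of `K[x_1,…,x_n]`. -/
def validPair (n : ℕ) (p : ℕ × ℕ) : Prop := 1 ≤ p.1 ∧ p.1 < p.2 ∧ p.2 ≤ n

/-- The lexsegment set `L(u,v)`, as a set of sorted index pairs. -/
def lexSegSet (n : ℕ) (u v : ℕ × ℕ) : Set (ℕ × ℕ) :=
  {w | validPair n w ∧ lexGE u w ∧ lexGE w v}

/-- The lexsegment edge ideal `I = (L(u,v)) ⊆ K[x_1,…,x_n]`. -/
noncomputable def lexSegIdeal (K : Type) [Field K] (n : ℕ) (u v : ℕ × ℕ) :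
    Ideal (MvPolynomial (Fin n) K) :=
  Ideal.span ((fun w : ℕ × ℕ => xv K n w.1 * xv K n w.2) '' lexSegSet n u v)

/-- The Alexander dual of the lexsegment edge ideal `(L(u,v))`: the intersection,
over the (minimal) monomial generators `x_p x_q` with `(p,q) ∈ L(u,v)`, of the
prime ideals `(x_p, x_q)`. -/
noncomputable def lexSegAlexDual (K : Type) [Field K] (n : ℕ) (u v : ℕ × ℕ) :
    Ideal (MvPolynomial (Fin n) K) :=
  ⨅ w ∈ lexSegSet n u v, Ideal.span {xv K n w.1, xv K n w.2}

/-- The arithmetical rank of an ideal: the least `r` such that some `r` elements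
of `J` generate an ideal with the same radical as `J`. -/
noncomputable def ara {R : Type} [CommRing R] (J : Ideal R) : ℕ :=
  sInf {r : ℕ | ∃ f : Fin r → R, (∀ t, f t ∈ J) ∧
    (Ideal.span (Set.range f)).radical = J.radical}

/-- The projective dimension of a module `M`: the least `d` admitting a projective
resolution vanishing in homological degrees `> d`. -/
noncomputable def projDim {R : Type} [CommRing R] (M : ModuleCat R) : ℕ :=
  sInf {d : ℕ | ∃ P : CategoryTheory.ProjectiveResolution M,
    ∀ i : ℕ, d < i → CategoryTheory.Limits.IsZero (P.complex.X i)}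

/-- The depth of `S/I` with respect to the graded maximal ideal `(x_1,…,x_n)`:
the longest length of a regular sequence on `S/I` consisting of elements of
`(x_1,…,x_n)`. -/
noncomputable def smDepth (K : Type) [Field K] (n : ℕ)
    (I : Ideal (MvPolynomial (Fin n) K)) : ℕ :=
  sSup {r : ℕ | ∃ rs : List (MvPolynomial (Fin n) K), rs.length = r ∧
    (∀ a ∈ rs, a ∈ Ideal.span
      (Set.range (MvPolynomial.X : Fin n → MvPolynomial (Fin n) K))) ∧
    RingTheory.Sequence.IsRegular (MvPolynomial (Fin n) K ⧸ I) rs}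

/-- The height of an ideal: the infimum of the heights of the primes containing it. -/
noncomputable def idealHeight {R : Type} [CommRing R] (I : Ideal R) : ℕ∞ :=
  ⨅ p ∈ {p : PrimeSpectrum R | I ≤ p.asIdeal}, Order.height p

/-- `m` is a monomial of `K[x_1,…,x_n]`. -/
def IsMonomial {K : Type} [Field K] {n : ℕ} (m : MvPolynomial (Fin n) K) : Prop :=
  ∃ s : Fin n →₀ ℕ, m = MvPolynomial.monomial s 1

/-- `m` is a squarefree monomial of `K[x_1,…,x_n]`. -/
def IsSqFreeMonomial {K : Type} [Field K] {n : ℕ} (m : MvPolynomial (Fin n) K) : Prop :=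
  ∃ t : Finset (Fin n), m = t.prod (fun i => MvPolynomial.X i)

/-- `m` is a minimal monomial generator of the monomial ideal `I`: a monomial of `I`
divisible by no monomial of `I` other than itself. -/
def IsMinimalMonomialGen {K : Type} [Field K] {n : ℕ}
    (I : Ideal (MvPolynomial (Fin n) K)) (m : MvPolynomial (Fin n) K) : Prop :=
  IsMonomial m ∧ m ∈ I ∧
    ∀ m', IsMonomial m' → m' ∈ I → m' ∣ m → m' = m

/-! ### Resolutions of bounded length -/

section Resolution
open CategoryTheory CategoryTheory.Limits

/-- A module of projective dimension at most `d` (vanishing of `Ext` in degrees above `d`) has a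
projective resolution of length at most `d`. By induction on `d`: a surjection `P → M` from a
projective is extended to the left by a resolution of its kernel. -/
theorem exists_res {R : Type} [CommRing R] (d : ℕ) : ∀ (M : ModuleCat.{0} R)
    (_ : HasProjectiveDimensionLT M (d+1)),
    ∃ P : ProjectiveResolution M, ∀ i : ℕ, d < i → IsZero (P.complex.X i) := by
  induction d with
  | zero =>
    intro M hM
    have : Projective M := projective_iff_hasProjectiveDimensionLT_one.2 hM
    refine ⟨ProjectiveResolution.self M, fun i hi => ?_⟩
    simp only [ProjectiveResolution.self_complex]
    apply HomologicalComplex.isZero_single_obj_X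
    omega
  | succ d ih =>
    intro M hM
    let S : ShortComplex (ModuleCat R) := ShortComplex.mk (kernel.ι (Projective.π M)) (Projective.π M) (by simp)
    have hS : S.ShortExact := { exact := ShortComplex.exact_kernel _ }
    have hP : Projective S.X₂ := Projective.projective_over M
    have h1 : HasProjectiveDimensionLT S.X₁ (d+1) := (hS.hasProjectiveDimensionLT_X₃_iff d hP).1 hM
    obtain ⟨Q, hQ⟩ := ih S.X₁ h1
    obtain ⟨q, hq, hqe, hqx⟩ : ∃ (q : Q.complex.X 0 ⟶ S.X₁) (hq : Q.complex.d 1 0 ≫ q = 0),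
        Epi q ∧ (ShortComplex.mk _ _ hq).Exact :=
      ⟨Q.π.f 0, Q.complex_d_comp_π_f_zero, inferInstanceAs (Epi (Q.π.f 0)), Q.exact₀⟩
    have hw : Q.complex.d 1 0 ≫ (q ≫ S.f) = 0 := by
      rw [← Category.assoc, hq, zero_comp]
    let C := Q.complex.augment (X := S.X₂) (q ≫ S.f) hw
    have hg : (q ≫ S.f) ≫ S.g = 0 := by rw [Category.assoc, S.zero, comp_zero]
    -- Exactness at `P` and at `Q₀` of `⋯ → Q₁ → Q₀ → P → M`, where `Q` resolves the kernel.
    have e1 : (ShortComplex.mk (q ≫ S.f) S.g hg).Exact := by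
      let α : ShortComplex.mk (q ≫ S.f) S.g hg ⟶ S :=
        { τ₁ := q, τ₂ := 𝟙 _, τ₃ := 𝟙 _ }
      have : Epi α.τ₁ := hqe
      have : IsIso α.τ₂ := inferInstanceAs (IsIso (𝟙 _))
      have : Mono α.τ₃ := inferInstanceAs (Mono (𝟙 _))
      exact (ShortComplex.exact_iff_of_epi_of_isIso_of_mono α).2 hS.exact
    have e2 : (ShortComplex.mk (Q.complex.d 1 0) (q ≫ S.f) hw).Exact := by
      let α : ShortComplex.mk _ _ hq ⟶ ShortComplex.mk (Q.complex.d 1 0) (q ≫ S.f) hw :=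
        { τ₁ := 𝟙 _, τ₂ := 𝟙 _, τ₃ := S.f }
      have : Epi α.τ₁ := inferInstanceAs (Epi (𝟙 _))
      have : IsIso α.τ₂ := inferInstanceAs (IsIso (𝟙 _))
      have : Mono α.τ₃ := hS.mono_f
      exact (ShortComplex.exact_iff_of_epi_of_isIso_of_mono α).1 hqx
    have hex : ∀ n, C.ExactAt (n+1) := by
      intro n
      rw [HomologicalComplex.exactAt_iff' _ (n + 1 + 1) (n + 1) n (by simp) (by simp)]
      cases n with
      | zero => exact e2
      | succ n => exact Q.exact_succ n
    have hproj : ∀ n, Projective (C.X n) := by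
      intro n; cases n with
      | zero => exact hP
      | succ n => exact Q.projective n
    refine ⟨{ complex := C, projective := hproj,
              π := (ChainComplex.toSingle₀Equiv C M).symm ⟨S.g, ?_⟩, quasiIso := ?_ }, ?_⟩
    · exact hg
    · refine ⟨fun n => ?_⟩
      cases n
      · rw [ChainComplex.quasiIsoAt₀_iff, ShortComplex.quasiIso_iff_of_zeros']
        · refine (ShortComplex.exact_and_epi_g_iff_of_iso ?_).2
            ⟨e1, hS.epi_g⟩
          refine ShortComplex.isoMk (Iso.refl _) (Iso.refl _) (Iso.refl _)
            ?_ ?_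
          · exact (Category.id_comp _).trans (Category.comp_id _).symm
          · refine (Category.id_comp _).trans (Eq.trans ?_ (Category.comp_id _).symm)
            exact (ChainComplex.toSingle₀Equiv_symm_apply_f_zero (C := C) (X := M) S.g hg).symm
        all_goals rfl
      · rw [quasiIsoAt_iff_exactAt']
        · apply hex
        · apply ChainComplex.exactAt_succ_single_obj
    · intro i hi
      obtain ⟨j, rfl⟩ : ∃ j, i = j + 1 := ⟨i-1, by omega⟩
      exact hQ j (by omega)
end Resolution

/-! ### Koszul cochains -/

section Koszul
variable {R : Type} [CommRing R] {ι : Type} [LinearOrder ι] {M M' : Type} [AddCommGroup M]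
  [Module R M] [AddCommGroup M'] [Module R M']

/-- The Koszul sign `(-1) ^ #{j ∈ σ | j < i}`. -/
def ksgn (R : Type) [CommRing R] {ι : Type} [LinearOrder ι] (i : ι) (σ : Finset ι) : R := (-1) ^ (σ.filter (· < i)).card

/-- The Koszul coboundary of an alternating `M`-valued cochain `k`, for the family `a`:
`(kd a k) σ = ∑ i ∈ σ, ± a i • k (σ \ {i})`. A cochain is a function on all finite sets of
indices; the degree `#σ` is not recorded in the type, since `kd` sends the values in degree `p` to
values in degree `p + 1`. -/
def kd (a : ι → R) (k : Finset ι → M) (σ : Finset ι) : M :=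
  ∑ i ∈ σ, (ksgn R i σ * a i) • k (σ.erase i)

theorem kd_congr (a : ι → R) {k k' : Finset ι → M} {σ : Finset ι}
    (h : ∀ i ∈ σ, k (σ.erase i) = k' (σ.erase i)) : kd a k σ = kd a k' σ :=
  Finset.sum_congr rfl fun i hi => by rw [h i hi]

theorem kd_map (a : ι → R) (f : M →ₗ[R] M') (k : Finset ι → M) (σ : Finset ι) :
    f (kd a k σ) = kd a (fun τ => f (k τ)) σ := by
  simp [kd]

theorem kd_sub (a : ι → R) (k k' : Finset ι → M) (σ : Finset ι) :
    kd a (fun τ => k τ - k' τ) σ = kd a k σ - kd a k' σ := by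
  simp [kd, smul_sub]

theorem kd_zero (a : ι → R) {k : Finset ι → M} {σ : Finset ι}
    (h : ∀ i ∈ σ, k (σ.erase i) = 0) : kd a k σ = 0 :=
  Finset.sum_eq_zero fun i hi => by rw [h i hi, smul_zero]

/-- Multiplying the value at `σ` of a cochain by `(h * ∏ i ∈ σ, a i) ^ T` turns the coboundary
for the powers `a i ^ L` into the one for the powers `a i ^ (L + T)`. -/
theorem kd_scale (a : ι → R) (h : R) (L T : ℕ) (k : Finset ι → M) (σ : Finset ι) :
    kd (fun i => a i ^ (L + T)) (fun τ => (h * ∏ i ∈ τ, a i) ^ T • k τ) σ =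
      (h * ∏ i ∈ σ, a i) ^ T • kd (fun i => a i ^ L) k σ := by
  simp only [kd, Finset.smul_sum, smul_smul]
  refine Finset.sum_congr rfl fun i hi => ?_
  congr 1
  rw [← Finset.mul_prod_erase σ a hi]
  ring

theorem ksgn_swap {i j : ι} {σ : Finset ι} (hi : i ∈ σ) (h : i < j) :
    ksgn R i σ * ksgn R j (σ.erase i) = - (ksgn R j σ * ksgn R i (σ.erase j)) := by
  have h1 : ((σ.erase j).filter (· < i)) = σ.filter (· < i) := by
    ext l; simp only [Finset.mem_filter, Finset.mem_erase]
    constructor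
    · rintro ⟨⟨_, a⟩, b⟩; exact ⟨a, b⟩
    · rintro ⟨a, b⟩; exact ⟨⟨(b.trans h).ne, a⟩, b⟩
  have h2 : (σ.filter (· < j)) = insert i ((σ.erase i).filter (· < j)) := by
    ext l; simp only [Finset.mem_filter, Finset.mem_erase, Finset.mem_insert]
    by_cases e : l = i
    · subst e; simp [hi, h]
    · simp [e]
  have h3 : (σ.filter (· < j)).card = ((σ.erase i).filter (· < j)).card + 1 := by
    rw [h2, Finset.card_insert_of_notMem (by simp)]
  simp only [ksgn]
  rw [h1, h3]; ring

theorem kd_kd (a : ι → R) (k : Finset ι → M) (σ : Finset ι) : kd a (kd a k) σ = 0 := by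
  simp only [kd, Finset.smul_sum, smul_smul]
  rw [Finset.sum_sigma']
  refine Finset.sum_involution (fun x _ => ⟨x.2, x.1⟩) ?_ ?_ ?_ ?_
  · rintro ⟨i, j⟩ h
    simp only [Finset.mem_sigma, Finset.mem_erase] at h
    obtain ⟨hi, hne, hj⟩ := h
    simp only
    rw [Finset.erase_right_comm, ← add_smul]
    convert zero_smul R _ using 2
    rcases lt_or_gt_of_ne hne with h | h
    · linear_combination (a i * a j) * (ksgn_swap (R := R) hj h)
    · linear_combination (a i * a j) * (ksgn_swap (R := R) hi h)
  · rintro ⟨i, j⟩ h _ he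
    simp only [Finset.mem_sigma, Finset.mem_erase] at h
    simp only [Sigma.mk.injEq] at he
    exact h.2.1 he.1
  · rintro ⟨i, j⟩ h
    simp only [Finset.mem_sigma, Finset.mem_erase] at h ⊢
    exact ⟨h.2.2, h.2.1.symm, h.1⟩
  · rintro ⟨i, j⟩ h; rfl

/-- The coboundary at `σ ∪ {m}` with `m` larger than `σ`: the Koszul complex of `a` and `a m` as
a mapping cone. -/
theorem kd_insert (a : ι → R) (k : Finset ι → M) {σ : Finset ι} {m : ι} (hm : ∀ i ∈ σ, i < m) :
    kd a k (insert m σ) = kd a (fun τ => k (insert m τ)) σ + ((-1) ^ σ.card * a m) • k σ := by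
  have hn : m ∉ σ := fun h => lt_irrefl _ (hm m h)
  rw [kd, Finset.sum_insert hn, add_comm]
  congr 1
  · refine Finset.sum_congr rfl fun i hi => ?_
    have : (insert m σ).filter (· < i) = σ.filter (· < i) := by
      rw [Finset.filter_insert, if_neg (not_lt.2 (hm i hi).le)]
    rw [ksgn, this, Finset.erase_insert_of_ne (hm i hi).ne']; rfl
  · have : (insert m σ).filter (· < m) = σ := by
      rw [Finset.filter_insert, if_neg (lt_irrefl _), Finset.filter_true_of_mem hm]
    rw [ksgn, this, Finset.erase_insert hn]

/-- Every ordering of the family `(a i)`, `i ∈ W`, is a weakly regular sequence on `M`: for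
`V ⊆ W` and `i ∈ W \ V`, the element `a i` is a nonzerodivisor on `M / (a j : j ∈ V) M`. -/
def RegFam (M : Type) [AddCommGroup M] [Module R M] (a : ι → R) (W : Finset ι) : Prop :=
  ∀ (V : Finset ι) (i : ι), V ⊆ W → i ∈ W → i ∉ V → ∀ y : M,
    a i • y ∈ (Ideal.span (a '' V) • ⊤ : Submodule R M) → y ∈ (Ideal.span (a '' V) • ⊤ : Submodule R M)

theorem exists_kd_of_mem (a : ι → R) (V : Finset ι) (y : M)
    (hy : y ∈ (Ideal.span (a '' V) • ⊤ : Submodule R M)) :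
    ∃ u : Finset ι → M, kd a u V = y := by
  have : ∃ c : ι → M, ∑ i ∈ V, a i • c i = y := by
    refine Submodule.smul_induction_on hy ?_ ?_
    · intro r hr m _
      refine Submodule.span_induction (p := fun r _ => ∃ c : ι → M, ∑ i ∈ V, a i • c i = r • m) ?_ ?_ ?_ ?_ hr
      · rintro _ ⟨i, hi, rfl⟩
        exact ⟨fun j => if j = i then m else 0, by simp [Finset.mem_coe.1 hi]⟩
      · exact ⟨0, by simp⟩
      · rintro x y _ _ ⟨c, hc⟩ ⟨d, hd⟩
        exact ⟨c + d, by simp [smul_add, Finset.sum_add_distrib, hc, hd, add_smul]⟩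
      · rintro s x _ ⟨c, hc⟩
        refine ⟨s • c, ?_⟩
        rw [smul_eq_mul, mul_smul, ← hc, Finset.smul_sum]
        exact Finset.sum_congr rfl fun i _ => smul_comm _ _ _
    · rintro x y ⟨c, hc⟩ ⟨d, hd⟩
      exact ⟨c + d, by simp [smul_add, Finset.sum_add_distrib, hc, hd]⟩
  obtain ⟨c, hc⟩ := this
  classical
  refine ⟨fun τ => ∑ i ∈ V, if τ = V.erase i then ksgn R i V • c i else 0, ?_⟩
  rw [← hc, kd]
  refine Finset.sum_congr rfl fun i hi => ?_
  rw [Finset.sum_eq_single_of_mem i hi]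
  · rw [if_pos rfl, smul_smul]
    congr 1
    rw [mul_comm, ← mul_assoc, ksgn, ← pow_add, Even.neg_one_pow ⟨_, rfl⟩, one_mul]
  · intro j hj hne
    rw [if_neg]
    intro h
    have : i ∉ V.erase j := h ▸ Finset.notMem_erase i V
    exact this (Finset.mem_erase.2 ⟨hne.symm, hi⟩)

/-- Below the top degree `#W`, the Koszul complex of a regular family indexed by `W` is
exact. -/
theorem kd_exact (a : ι → R) (W : Finset ι) (hreg : RegFam M a W) :
    ∀ (p : ℕ) (_ : p < W.card) (k : Finset ι → M)
      (_ : ∀ σ ⊆ W, σ.card = p + 1 → kd a k σ = 0),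
      ∃ u : Finset ι → M, ∀ σ ⊆ W, σ.card = p → k σ = kd a u σ := by
  induction W using Finset.induction_on_max with
  | empty => intro p hp; simp at hp
  | insert m W hm ih =>
    intro p hp k hk
    have hn : m ∉ W := fun h => lt_irrefl _ (hm m h)
    replace ih := ih fun V i hV hi => hreg V i (hV.trans (Finset.subset_insert _ _))
      (Finset.mem_insert_of_mem hi)
    rw [Finset.card_insert_of_notMem hn] at hp
    have hsub : ∀ σ ⊆ W, insert m σ ⊆ insert m W := fun σ h => Finset.insert_subset_insert m h
    have hns : ∀ σ ⊆ W, m ∉ σ := fun σ h h' => hn (h h')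
    -- On subsets of `W` the cochain is a coboundary: by induction when `p < #W`. When `p = #W` the
    -- only value in question is `k W`, which lies in `(a W) M` because `a m • k W` does.
    have h1 : ∃ u : Finset ι → M, ∀ σ ⊆ W, σ.card = p → k σ = kd a u σ := by
      rcases Nat.lt_or_ge p W.card with h | h
      · exact ih p h k fun σ hσ hc => hk σ (hσ.trans (Finset.subset_insert _ _)) hc
      · have hpe : p = W.card := by omega
        have := hk (insert m W) (subset_refl _) (by rw [Finset.card_insert_of_notMem hn, hpe])
        rw [kd_insert a k hm] at this
        have h2 : k W ∈ (Ideal.span (a '' W) • ⊤ : Submodule R M) := by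
          apply hreg W m (Finset.subset_insert _ _) (Finset.mem_insert_self _ _) hn
          have h3 : a m • k W = (-1 : R) ^ (W.card) • -(kd a (fun τ => k (insert m τ)) W) := by
            rw [neg_eq_of_add_eq_zero_right this, smul_smul, ← mul_assoc, ← pow_add,
              Even.neg_one_pow ⟨_, rfl⟩, one_mul]
          rw [h3]
          refine Submodule.smul_mem _ _ (Submodule.neg_mem _ (Submodule.sum_mem _ fun i hi => ?_))
          exact Submodule.smul_mem_smul (Ideal.mul_mem_left _ _
            (Ideal.subset_span ⟨i, hi, rfl⟩)) trivial
        obtain ⟨u, hu⟩ := exists_kd_of_mem a W _ h2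
        refine ⟨u, fun σ hσ hc => ?_⟩
        rw [Finset.eq_of_subset_of_card_le hσ (by omega), hu]
    obtain ⟨u, hu⟩ := h1
    -- After subtracting a coboundary, `k` vanishes on the sets avoiding `m`.
    let u1 : Finset ι → M := fun τ => if m ∈ τ then 0 else u τ
    let k1 : Finset ι → M := fun τ => k τ - kd a u1 τ
    have hk1 : ∀ σ ⊆ insert m W, σ.card = p + 1 → kd a k1 σ = 0 := by
      intro σ h1 h2
      rw [kd_sub, kd_kd, hk σ h1 h2, sub_zero]
    have hk0 : ∀ σ ⊆ W, σ.card = p → k1 σ = 0 := by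
      intro σ h1 h2
      have : kd a u1 σ = kd a u σ := kd_congr a fun i hi => by
        simp only [u1]; rw [if_neg]; exact fun h => hns σ h1 (Finset.mem_of_mem_erase h)
      simp only [k1]; rw [this, hu σ h1 h2, sub_self]
    have hsplit : ∀ σ ⊆ insert m W, m ∉ σ → σ ⊆ W := fun σ h h' =>
      (Finset.subset_insert_iff_of_notMem h').1 h
    rcases Nat.eq_zero_or_pos p with rfl | hp0
    · refine ⟨u1, fun σ hσ hc => ?_⟩
      rw [Finset.card_eq_zero] at hc; subst hc
      have := hk0 ∅ (by simp) rfl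
      exact sub_eq_zero.1 this
    · obtain ⟨q, rfl⟩ : ∃ q, p = q + 1 := ⟨p - 1, by omega⟩
      -- The values of `k1` on the sets containing `m` form a cocycle of degree `p - 1` on `W`.
      obtain ⟨w, hw⟩ := ih q (by omega) (fun τ => k1 (insert m τ)) (by
        intro σ hσ hc
        have := hk1 (insert m σ) (hsub σ hσ) (by
          rw [Finset.card_insert_of_notMem (hns σ hσ), hc])
        rw [kd_insert a k1 fun i hi => hm i (hσ hi), hk0 σ hσ hc, smul_zero, add_zero] at this
        exact this)
      let w1 : Finset ι → M := fun τ => if m ∈ τ then w (τ.erase m) else 0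
      refine ⟨fun τ => u1 τ + w1 τ, fun σ hσ hc => ?_⟩
      have e : kd a (fun τ => u1 τ + w1 τ) σ = kd a u1 σ + kd a w1 σ := by
        simp [kd, smul_add, Finset.sum_add_distrib]
      rw [e, ← sub_eq_iff_eq_add']
      change k1 σ = _
      by_cases hmσ : m ∈ σ
      · obtain ⟨τ, hτ, rfl⟩ : ∃ τ, m ∉ τ ∧ insert m τ = σ :=
          ⟨σ.erase m, by simp, Finset.insert_erase hmσ⟩
        have hτW : τ ⊆ W := hsplit τ ((Finset.subset_insert _ _).trans hσ) hτ
        have hτc : τ.card = q := by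
          rw [Finset.card_insert_of_notMem hτ] at hc; omega
        rw [kd_insert a w1 fun i hi => hm i (hτW hi)]
        have : w1 τ = 0 := if_neg hτ
        rw [this, smul_zero, add_zero]
        refine (hw τ hτW hτc).trans (kd_congr a fun i hi => ?_)
        simp only [w1]
        rw [if_pos (Finset.mem_insert_self _ _), Finset.erase_insert]
        exact fun h => hτ (Finset.mem_of_mem_erase h)
      · rw [hk0 σ (hsplit σ hσ hmσ) hc, kd_zero]
        intro i hi
        exact if_neg fun h => hmσ (Finset.mem_of_mem_erase h)
end Koszul

/-! ### Regular families in polynomial rings -/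

/-- A family regular on `R` is regular on projective modules, since these are direct summands of
free modules. -/
theorem RegFam.of_projective {R : Type} [CommRing R] {ι : Type} {a : ι → R} {W : Finset ι}
    (h : RegFam R a W) (M : Type) [AddCommGroup M] [Module R M] [Module.Projective R M] :
    RegFam M a W := by
  intro V i hV hi hiV y hy
  -- `s` embeds `M` as a direct summand of a free module; membership is checked on coordinates.
  obtain ⟨s, hs⟩ := (Module.Projective.out : ∃ s : M →ₗ[R] M →₀ R, _)
  have hy' : y = Finsupp.linearCombination R (id : M → M) (s y) := (hs y).symm
  rw [hy', Finsupp.linearCombination_apply]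
  refine Submodule.sum_mem _ fun m _ => Submodule.smul_mem_smul ?_ trivial
  have key : ∀ z ∈ (Ideal.span (a '' V) • ⊤ : Submodule R M), s z m ∈ Ideal.span (a '' V) := by
    intro z hz
    refine Submodule.smul_induction_on hz ?_ ?_
    · intro r hr x _
      simpa using Ideal.mul_mem_right _ _ hr
    · intro x y hx hy; simpa using Ideal.add_mem _ hx hy
  have := h V i hV hi hiV (s y m) (by simpa using key _ hy)
  simpa using this

theorem regFam_X_pow {K : Type} [Field K] {τ : Type} {ι : Type} (x : ι → τ) (W : Finset ι)
    (hx : Set.InjOn x W) (L : ℕ) :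
    RegFam (MvPolynomial τ K) (fun i => (X (x i) : MvPolynomial τ K) ^ L) W := by
  classical
  intro V i hV hi hiV y hy
  have e : ((fun i => (X (x i) : MvPolynomial τ K) ^ L) '' V) =
    (fun s => monomial s (1 : K)) '' ((fun j => Finsupp.single (x j) L) '' V) := by
    rw [Set.image_image]; simp [X_pow_eq_monomial]
  simp only [smul_eq_mul, Ideal.mul_top, e] at hy ⊢
  rw [mem_ideal_span_monomial_image] at hy ⊢
  intro m hm
  obtain ⟨_, ⟨j, hj, rfl⟩, hle⟩ := hy (m + Finsupp.single (x i) L) (by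
    rw [mem_support_iff, X_pow_eq_monomial, add_comm, coeff_monomial_mul, one_mul]
    exact mem_support_iff.1 hm)
  refine ⟨_, ⟨j, hj, rfl⟩, ?_⟩
  have hne : x j ≠ x i := fun h => hiV (hx (hV hj) hi h ▸ hj)
  simp only [Finsupp.single_le_iff] at hle ⊢
  simpa [Finsupp.single_apply, hne.symm] using hle

/-! ### Torsion resolutions -/

section Htpy
variable {R : Type} [CommRing R] {ι : Type} [LinearOrder ι] {M : Type} [AddCommGroup M]
  [Module R M]

theorem ksgn_mul_self (i : ι) (σ : Finset ι) : ksgn R i σ * ksgn R i σ = 1 := by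
  rw [ksgn, ← pow_add, Even.neg_one_pow ⟨_, rfl⟩]

/-- Contraction of a cochain with the `i`-th basis vector: `τ ↦ ± k (τ ∪ {i})`. -/
def kcontr (i : ι) (k : Finset ι → M) (τ : Finset ι) : M :=
  if i ∈ τ then 0 else ksgn R i (insert i τ) • k (insert i τ)

/-- Contraction with the `i`-th basis vector is a homotopy between multiplication by `a i` and
zero. -/
theorem kd_kcontr (a : ι → R) (i : ι) (k : Finset ι → M) (σ : Finset ι) :
    kd a (kcontr (R := R) i k) σ + kcontr (R := R) i (kd a k) σ = a i • k σ := by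
  by_cases hi : i ∈ σ
  · rw [kcontr, if_pos hi, add_zero, kd, Finset.sum_eq_single_of_mem i hi]
    · rw [kcontr, if_neg (Finset.notMem_erase _ _), Finset.insert_erase hi, smul_smul]
      congr 1
      linear_combination a i * ksgn_mul_self (R := R) i σ
    · intro j _ hj
      rw [kcontr, if_pos (Finset.mem_erase.2 ⟨hj.symm, hi⟩), smul_zero]
  · rw [kcontr, if_neg hi, kd, kd, Finset.sum_insert hi, Finset.erase_insert hi, smul_add,
      add_left_comm, Finset.smul_sum, ← Finset.sum_add_distrib, Finset.sum_eq_zero, add_zero,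
      smul_smul]
    · congr 1
      linear_combination a i * ksgn_mul_self (R := R) i (insert i σ)
    · intro j hj
      have hne : j ≠ i := fun h => hi (h ▸ hj)
      rw [kcontr, if_neg fun h => hi (Finset.mem_of_mem_erase h),
        ← Finset.erase_insert_of_ne hne.symm, smul_smul, smul_smul, ← add_smul]
      convert zero_smul R _ using 2
      have hi' := Finset.mem_insert_self i σ
      have hj' : j ∈ insert i σ := Finset.mem_insert_of_mem hj
      have e : (insert i σ).erase i = σ := Finset.erase_insert hi
      have hs : ksgn R i (insert i σ) * ksgn R j σ =
          - (ksgn R j (insert i σ) * ksgn R i ((insert i σ).erase j)) := by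
        rcases lt_or_gt_of_ne hne with h | h
        · have := ksgn_swap (R := R) hj' h
          rw [e] at this; linear_combination this
        · have := ksgn_swap (R := R) hi' h
          rw [e] at this; exact this
      have h1 := ksgn_mul_self (R := R) j σ
      have h2 := ksgn_mul_self (R := R) j (insert i σ)
      generalize ksgn R i (insert i σ) = A at *
      generalize ksgn R j (insert i σ) = B at *
      generalize ksgn R j σ = C at *
      generalize ksgn R i ((insert i σ).erase j) = D at *
      linear_combination a j * (C * B * hs - A * B * h1 - C * D * h2)
end Htpy

section Torsion
open CategoryTheory

/-- A torsion resolution of `R ⧸ I` of length `r`: a complex of projective modules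
`0 → M r → ⋯ → M 0`, augmented by a surjection `M 0 → R ⧸ I`, such that each class in the homology
of the augmented complex is killed by a power of each element of `I`. Vanishing of the modules
above degree `r` is stated elementwise. -/
structure TorsionRes {R : Type} [CommRing R] (I : Ideal R) (r : ℕ) where
  M : ℕ → ModuleCat.{0} R
  proj : ∀ p, Module.Projective R (M p)
  d : ∀ p, M (p + 1) →ₗ[R] M p
  ε : M 0 →ₗ[R] R ⧸ I
  surj : Function.Surjective ε
  d_d : ∀ p x, d p (d (p + 1) x) = 0
  ε_d : ∀ x, ε (d 0 x) = 0
  zero : ∀ p, r < p → ∀ x : M p, x = 0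
  tors_zero : ∀ g ∈ I, ∀ y, ε y = 0 → ∃ T z, g ^ T • y = d 0 z
  tors : ∀ g ∈ I, ∀ p y, d p y = 0 → ∃ T z, g ^ T • y = d (p + 1) z

/-- A projective resolution is a torsion resolution: its homology vanishes. -/
theorem exists_torsionRes_of_resolution {R : Type} [CommRing R] (I : Ideal R) (r : ℕ)
    (P : ProjectiveResolution (ModuleCat.of R (R ⧸ I)))
    (hP : ∀ i, r < i → Limits.IsZero (P.complex.X i)) : Nonempty (TorsionRes I r) := by
  obtain ⟨q, hq, hqe, hqx⟩ : ∃ (q : P.complex.X 0 ⟶ ModuleCat.of R (R ⧸ I))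
      (hq : P.complex.d 1 0 ≫ q = 0), Epi q ∧ (ShortComplex.mk _ _ hq).Exact :=
    ⟨P.π.f 0, P.complex_d_comp_π_f_zero, inferInstanceAs (Epi (P.π.f 0)), P.exact₀⟩
  refine ⟨{ M := P.complex.X
            proj := fun p => ?_
            d := fun p => (P.complex.d (p + 1) p).hom
            ε := q.hom
            surj := (ModuleCat.epi_iff_surjective _).1 hqe
            d_d := fun p x => ?_
            ε_d := fun x => ?_
            zero := fun p hp x => ?_
            tors_zero := fun g _ y hy => ⟨0, ?_⟩
            tors := fun g _ p y hy => ⟨0, ?_⟩ }⟩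
  · have := P.projective p
    exact (IsProjective.iff_projective (R := R) (P.complex.X p)).2 this
  · have := P.complex.d_comp_d (p + 1 + 1) (p + 1) p
    exact congrArg (fun f => f.hom x) this
  · simpa using congrArg (fun f => f.hom x) hq
  · have := ModuleCat.subsingleton_of_isZero (hP p hp)
    exact Subsingleton.elim _ _
  · obtain ⟨z, hz⟩ := (ShortComplex.moduleCat_exact_iff _).1 hqx y hy
    exact ⟨z, by simpa using hz.symm⟩
  · obtain ⟨z, hz⟩ := (ShortComplex.moduleCat_exact_iff _).1 (P.exact_succ p) y hy
    exact ⟨z, by simpa using hz.symm⟩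

section KoszulRes
variable {R : Type} [CommRing R] {r : ℕ} (f : Fin r → R)

/-- The `p`-th module of the Koszul complex of `r` elements. It is free on the subsets of `Fin r`
of size `r - p`, so that the differentials, which are coboundaries, lower `p`. -/
abbrev KosMod (R : Type) (r p : ℕ) : Type := {σ : Finset (Fin r) // σ.card + p = r} → R

/-- Extension by zero of an element of the Koszul complex to a cochain on all subsets. -/
def kosExt {p : ℕ} (k : KosMod R r p) (σ : Finset (Fin r)) : R :=
  if h : σ.card + p = r then k ⟨σ, h⟩ else 0

/-- The differential of the Koszul complex of `f`. -/
def kosD (p : ℕ) : KosMod R r (p + 1) →ₗ[R] KosMod R r p where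
  toFun k σ := kd f (kosExt k) σ.1
  map_add' k l := by
    funext σ
    simp only [kd, Pi.add_apply, ← Finset.sum_add_distrib, ← smul_add]
    refine Finset.sum_congr rfl fun i _ => ?_
    congr 1
    simp only [kosExt]; split_ifs <;> simp
  map_smul' c k := by
    funext σ
    simp only [kd, Pi.smul_apply, Finset.smul_sum, RingHom.id_apply]
    refine Finset.sum_congr rfl fun i _ => ?_
    rw [smul_comm]
    congr 1
    simp only [kosExt]; split_ifs <;> simp

theorem kosExt_kosD (p : ℕ) (k : KosMod R r (p + 1)) :
    kosExt (kosD f p k) = kd f (kosExt k) := by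
  funext σ
  by_cases h : σ.card + p = r
  · rw [kosExt, dif_pos h]; rfl
  · rw [kosExt, dif_neg h, kd_zero]
    intro i hi
    rw [kosExt, dif_neg]
    have := Finset.card_erase_add_one hi
    omega

/-- The ideal generated by `f`, hence some power of each element of its radical, kills the
homology of the Koszul complex of `f`. -/
theorem kos_tors (p : ℕ) (y : KosMod R r p) (hy : kd f (kosExt y) = 0) {g : R}
    (hg : g ∈ (Ideal.span (Set.range f)).radical) : ∃ T z, g ^ T • y = kosD f p z := by
  obtain ⟨T, hT⟩ := hg
  have : Ideal.span (Set.range f) ≤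
      (LinearMap.range (kosD f p)).comap (LinearMap.toSpanSingleton R _ y) := by
    rw [Ideal.span_le]
    rintro _ ⟨i, rfl⟩
    refine ⟨fun τ => kcontr (R := R) i (kosExt y) τ.1, ?_⟩
    funext σ
    have e : kosExt (p := p + 1) (fun τ => kcontr (R := R) i (kosExt y) τ.1) =
        kcontr (R := R) i (kosExt y) := by
      funext τ
      rw [kosExt]
      split_ifs with h
      · rfl
      · rw [kcontr]
        split_ifs with h'
        · rfl
        · rw [kosExt, dif_neg, smul_zero]
          rw [Finset.card_insert_of_notMem h']; omega
    have h := kd_kcontr f i (kosExt y) σ.1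
    rw [hy] at h
    have h0 : kcontr (R := R) i (0 : Finset (Fin r) → R) σ.1 = 0 := by simp [kcontr]
    rw [h0, add_zero, kosExt, dif_pos σ.2] at h
    change kd f _ σ.1 = f i • y σ
    rw [e, h]
  obtain ⟨z, hz⟩ := this hT
  exact ⟨T, z, hz.symm⟩

/-- If `r` elements of `I` generate `I` up to radical, their Koszul complex is a torsion
resolution of `R ⧸ I`, augmented by `R → R ⧸ I` rather than by the map to its own zeroth
homology. -/
theorem exists_torsionRes_of_radical {I : Ideal R} (hf : ∀ t, f t ∈ I)
    (hrad : (Ideal.span (Set.range f)).radical = I.radical) : Nonempty (TorsionRes I r) := by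
  have hI : I ≤ (Ideal.span (Set.range f)).radical := hrad ▸ Ideal.le_radical
  let top : {σ : Finset (Fin r) // σ.card + 0 = r} := ⟨Finset.univ, by simp⟩
  refine ⟨{ M := fun p => ModuleCat.of R (KosMod R r p)
            proj := fun p => inferInstanceAs (Module.Projective R (KosMod R r p))
            d := fun p => kosD f p
            ε := (Submodule.mkQ I).comp (LinearMap.proj top)
            surj := ?_
            d_d := fun p x => ?_
            ε_d := fun x => ?_
            zero := fun p hp x => ?_
            tors_zero := fun g hg y hy => kos_tors f 0 y ?_ (hI hg)
            tors := fun g hg p y hy => kos_tors f (p + 1) y ?_ (hI hg) }⟩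
  · intro x
    obtain ⟨x, rfl⟩ := Submodule.mkQ_surjective I x
    exact ⟨fun _ => x, rfl⟩
  · funext σ
    change kd f (kosExt (kosD f (p + 1) x)) σ.1 = 0
    rw [kosExt_kosD, kd_kd]
  · change Submodule.mkQ I (kd f (kosExt x) Finset.univ) = 0
    rw [Submodule.mkQ_apply, Submodule.Quotient.mk_eq_zero]
    refine Submodule.sum_mem _ fun i _ => ?_
    exact Ideal.mul_mem_right _ _ (Ideal.mul_mem_left _ _ (hf i))
  · funext σ
    have := σ.2
    omega
  · funext σ
    refine kd_zero _ fun i hi => ?_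
    rw [kosExt, dif_neg]
    have := Finset.card_erase_add_one hi
    have := Finset.card_le_univ σ
    simp at this
    omega
  · rw [← kosExt_kosD]
    funext σ
    have hy : kosD f p y = 0 := hy
    rw [hy]; simp [kosExt]
end KoszulRes
end Torsion

/-! ### The Koszul obstruction -/

section Lower
variable {R : Type} [CommRing R] {I : Ideal R} {r : ℕ} {ι : Type} [LinearOrder ι]

/-- A partial lift of the cochain `κ • θ` of degree `e` through the complex `C`. In degree `e + j`
it has a cochain `k j` with values in `C.M j` whose image in `C.M (j - 1)` is the Koszul coboundary
of `k (j - 1)`, for `1 ≤ j ≤ q`. To make room for the torsion of `C`, the coboundaries are those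
of the powers `a i ^ (T + 1)` and `κ σ` is scaled by `(h * ∏ i ∈ σ, a i) ^ T`. Above degree `e` the
cochains are supported on the sets `σ` with `h * ∏ i ∈ σ, a i ∈ I`, whose products kill torsion. -/
structure LiftedCochain (C : TorsionRes I r) (θ : C.M 0) (a : ι → R) (W : Finset ι) (e : ℕ) (h : R)
    (κ : Finset ι → R) (q T : ℕ) (k : ∀ j, Finset ι → C.M j) : Prop where
  base : ∀ σ ⊆ W, σ.card = e → k 0 σ = ((h * ∏ i ∈ σ, a i) ^ T * κ σ) • θ
  lift : ∀ j < q, ∀ σ ⊆ W, σ.card = e + j + 1 →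
    C.d j (k (j + 1) σ) = kd (fun i => a i ^ (T + 1)) (k j) σ
  supp : ∀ j, 1 ≤ j → j ≤ q → ∀ σ ⊆ W, σ.card = e + j → h * ∏ i ∈ σ, a i ∉ I → k j σ = 0

variable {C : TorsionRes I r} {θ : C.M 0} {a : ι → R} {W : Finset ι} {e : ℕ} {h : R}
  {κ : Finset ι → R}

theorem LiftedCochain.rescale {q T : ℕ} {k : ∀ j, Finset ι → C.M j}
    (H : LiftedCochain C θ a W e h κ q T k) (T' : ℕ) :
    LiftedCochain C θ a W e h κ q (T + T') (fun j σ => (h * ∏ i ∈ σ, a i) ^ T' • k j σ) where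
  base σ hσ hc := by
    rw [H.base σ hσ hc, smul_smul]; congr 1; ring
  lift j hj σ hσ hc := by
    rw [map_smul, H.lift j hj σ hσ hc, ← kd_scale]
    congr 1; funext i; congr 1; ring
  supp j h1 h2 σ hσ hc hg := by
    rw [H.supp j h1 h2 σ hσ hc hg, smul_zero]

/-- The next step of a lift, at one set `σ`: the coboundary of `k q` at `σ` is a cycle of `C`
(for `q = 0`, of the augmented complex), so a power of `h * ∏ i ∈ σ, a i` makes it a boundary if
this element lies in `I`. Otherwise the coboundary is already zero: for `q = 0` by the hypothesis on
`κ`, and for `q > 0` because `k q` vanishes on the faces of `σ`. -/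
theorem LiftedCochain.obstruction
    (hκ : ∀ σ ⊆ W, σ.card = e + 1 → kd a κ σ = 0 ∨ (kd a κ σ ∈ I ∧ h * ∏ i ∈ σ, a i ∈ I))
    {q T : ℕ} {k : ∀ j, Finset ι → C.M j} (H : LiftedCochain C θ a W e h κ q T k)
    (σ : Finset ι) (hσ : σ ⊆ W) (hc : σ.card = e + q + 1) :
    ∃ (T' : ℕ) (z : C.M (q + 1)),
      C.d q z = (h * ∏ i ∈ σ, a i) ^ T' • kd (fun i => a i ^ (T + 1)) (k q) σ ∧
      (h * ∏ i ∈ σ, a i ∉ I → z = 0) := by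
  have herase : ∀ i ∈ σ, (σ.erase i).card = e + q := fun i hi => by
    have := Finset.card_erase_add_one hi; omega
  by_cases h0 : kd (fun i => a i ^ (T + 1)) (k q) σ = 0
  · exact ⟨0, 0, by simp [h0], fun _ => rfl⟩
  cases q with
  | zero =>
    have e1 : kd (fun i => a i ^ (T + 1)) (k 0) σ =
        ((h * ∏ i ∈ σ, a i) ^ T * kd a κ σ) • θ := by
      have h1 := kd_scale a h 1 T κ σ
      have h2 := kd_map (fun i => a i ^ (1 + T)) (LinearMap.toSpanSingleton R (C.M 0) θ)
        (fun τ => (h * ∏ i ∈ τ, a i) ^ T • κ τ) σ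
      rw [h1] at h2
      simp only [LinearMap.toSpanSingleton_apply, pow_one, smul_eq_mul] at h2
      rw [h2]
      rw [add_comm T 1]
      exact kd_congr _ fun i hi => H.base _ ((Finset.erase_subset _ _).trans hσ) (herase i hi)
    rcases hκ σ hσ (by omega) with hz | ⟨hI, hg⟩
    · rw [e1, hz, mul_zero, zero_smul] at h0; exact absurd rfl h0
    · have : C.ε (kd (fun i => a i ^ (T + 1)) (k 0) σ) = 0 := by
        rw [e1, map_smul]
        obtain ⟨t, ht⟩ := Ideal.Quotient.mk_surjective (C.ε θ)
        rw [← ht, ← Ideal.Quotient.mk_eq_mk, ← Submodule.Quotient.mk_smul,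
          Submodule.Quotient.mk_eq_zero]
        exact Ideal.mul_mem_right _ _ (Ideal.mul_mem_left _ _ hI)
      obtain ⟨T', z, hz⟩ := C.tors_zero _ hg _ this
      exact ⟨T', z, hz.symm, fun h => absurd hg h⟩
  | succ q =>
    by_cases hg : h * ∏ i ∈ σ, a i ∈ I
    · have : C.d q (kd (fun i => a i ^ (T + 1)) (k (q + 1)) σ) = 0 := by
        rw [kd_map, ← kd_kd (fun i => a i ^ (T + 1)) (k q) σ]
        exact kd_congr _ fun i hi => H.lift q (by omega) _
          ((Finset.erase_subset _ _).trans hσ) (herase i hi)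
      obtain ⟨T', z, hz⟩ := C.tors _ hg _ _ this
      exact ⟨T', z, hz.symm, fun h => absurd hg h⟩
    · refine absurd (kd_zero _ fun i hi => ?_) h0
      refine H.supp (q + 1) (by omega) le_rfl _ ((Finset.erase_subset _ _).trans hσ)
        (herase i hi) fun hm => hg ?_
      rw [← Finset.mul_prod_erase σ a hi, mul_left_comm]
      exact Ideal.mul_mem_left _ _ hm

/-- The hypothesis `hκ` is what is needed to start the lift: the coboundary of `κ` is zero modulo
`I`, and is zero wherever `h * ∏ i ∈ σ, a i` is not in `I`. -/
theorem exists_liftedCochain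
    (hκ : ∀ σ ⊆ W, σ.card = e + 1 → kd a κ σ = 0 ∨ (kd a κ σ ∈ I ∧ h * ∏ i ∈ σ, a i ∈ I))
    (q : ℕ) : ∃ T k, LiftedCochain C θ a W e h κ q T k := by
  induction q with
  | zero =>
    refine ⟨0, fun j => match j with
      | 0 => fun σ => κ σ • θ
      | _ + 1 => fun _ => 0, ?_, ?_, ?_⟩
    · intro σ _ _; simp
    · intro j hj; omega
    · intro j h1 h2; omega
  | succ q ih =>
    obtain ⟨T, k, H⟩ := ih
    have := fun σ : Finset ι => show ∃ (T' : ℕ) (z : C.M (q + 1)), σ ⊆ W → σ.card = e + q + 1 →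
        C.d q z = (h * ∏ i ∈ σ, a i) ^ T' • kd (fun i => a i ^ (T + 1)) (k q) σ ∧
        (h * ∏ i ∈ σ, a i ∉ I → z = 0) by
      by_cases h1 : σ ⊆ W ∧ σ.card = e + q + 1
      · obtain ⟨T', z, hz⟩ := H.obstruction hκ σ h1.1 h1.2
        exact ⟨T', z, fun _ _ => hz⟩
      · exact ⟨0, 0, fun h2 h3 => absurd ⟨h2, h3⟩ h1⟩
    choose T' z hz using this
    -- One exponent `S` for all `σ`; raising the scaling by it absorbs all the torsion.
    let S := W.powerset.sup T'
    have hS : ∀ σ ⊆ W, T' σ ≤ S := fun σ hσ => Finset.le_sup (Finset.mem_powerset.2 hσ)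
    have H' := H.rescale S
    let k' : ∀ j, Finset ι → C.M j := fun j σ => (h * ∏ i ∈ σ, a i) ^ S • k j σ
    change LiftedCochain C θ a W e h κ q (T + S) k' at H'
    let k'' := Function.update k' (q + 1) fun σ => (h * ∏ i ∈ σ, a i) ^ (S - T' σ) • z σ
    have hk0 : ∀ j, j ≤ q → k'' j = k' j := fun j hj => Function.update_of_ne (by omega) _ _
    have hk1 : k'' (q + 1) = fun σ => (h * ∏ i ∈ σ, a i) ^ (S - T' σ) • z σ :=
      Function.update_self _ _ _
    refine ⟨T + S, k'', ?_, ?_, ?_⟩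
    · intro σ hσ hc; rw [hk0 0 (by omega)]; exact H'.base σ hσ hc
    · intro j hj σ hσ hc
      rw [hk0 j (by omega)]
      rcases Nat.lt_or_ge j q with h | h
      · rw [hk0 (j + 1) h]; exact H'.lift j h σ hσ hc
      · obtain rfl : j = q := by omega
        rw [hk1, map_smul, (hz σ hσ hc).1, smul_smul, ← pow_add, Nat.sub_add_cancel (hS σ hσ),
          ← kd_scale]
        congr 1; funext i; congr 1; ring
    · intro j h1 h2 σ hσ hc hg
      rcases Nat.lt_or_ge q j with h | h
      · obtain rfl : j = q + 1 := by omega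
        rw [hk1]
        simp only
        rw [(hz σ hσ (by omega)).2 hg, smul_zero]
      · rw [hk0 j h]; exact H'.supp j h1 h σ hσ hc hg

/-- A torsion resolution of length `r` trivializes Koszul cocycles modulo `I` on more than `e + r`
elements. Let `κ` be a cochain of degree `e` whose coboundary is zero modulo `I`, and zero wherever
`h * ∏ i ∈ σ, a i` is not in `I`. If `e + r < #W` then `κ`, scaled by powers of
`h * ∏ i ∈ σ, a i`, is a coboundary modulo `I`, for powers of `a`. -/
theorem TorsionRes.obstruction (C : TorsionRes I r) (a : ι → R) (W : Finset ι) (e : ℕ) (h : R)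
    (κ : Finset ι → R) (hreg : ∀ L, RegFam R (fun i => a i ^ L) W)
    (hκ : ∀ σ ⊆ W, σ.card = e + 1 → kd a κ σ = 0 ∨ (kd a κ σ ∈ I ∧ h * ∏ i ∈ σ, a i ∈ I))
    (hW : e + r < W.card) :
    ∃ (T : ℕ) (s : Finset ι → R), ∀ σ ⊆ W, σ.card = e →
      (h * ∏ i ∈ σ, a i) ^ T * κ σ - kd (fun i => a i ^ (T + 1)) s σ ∈ I := by
  obtain ⟨θ, hθ⟩ := C.surj (Ideal.Quotient.mk I 1)
  obtain ⟨T, k, H⟩ := exists_liftedCochain (C := C) (θ := θ) hκ (r + 1)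
  -- Starting from `k (r + 1) = 0`, Koszul exactness with coefficients in the projective `C.M j`
  -- shows by descending induction that `k j` is a boundary of `C` plus a Koszul coboundary.
  have claim : ∀ i j, i + j = r + 1 → ∃ (u : Finset ι → C.M j) (w : Finset ι → C.M (j + 1)),
      ∀ σ ⊆ W, σ.card = e + j → k j σ = C.d j (w σ) + kd (fun i => a i ^ (T + 1)) u σ := by
    intro i
    induction i with
    | zero =>
      intro j hj
      exact ⟨0, 0, fun σ _ _ => (C.zero j (by omega) _).trans (C.zero j (by omega) _).symm⟩
    | succ i ih =>
      intro j hj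
      obtain ⟨u, w, huw⟩ := ih (j + 1) (by omega)
      have := C.proj j
      obtain ⟨u', hu'⟩ := kd_exact (fun i => a i ^ (T + 1)) W ((hreg (T + 1)).of_projective (C.M j))
        (e + j) (by omega) (fun σ => k j σ - C.d j (u σ)) (by
          intro σ hσ hc
          rw [kd_sub, ← H.lift j (by omega) σ hσ hc, huw σ hσ hc, map_add, C.d_d, zero_add,
            kd_map, sub_self])
      refine ⟨u', u, fun σ hσ hc => ?_⟩
      rw [← hu' σ hσ hc]; abel
  obtain ⟨u, w, huw⟩ := claim (r + 1) 0 (by omega)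
  -- At `j = 0` the augmentation kills the boundary and sends `θ` to `1`.
  choose s hs using fun σ => Ideal.Quotient.mk_surjective (C.ε (u σ))
  refine ⟨T, s, fun σ hσ hc => ?_⟩
  have h1 := congrArg C.ε (huw σ hσ hc)
  rw [H.base σ hσ hc, map_smul, map_add, C.ε_d, zero_add, kd_map, hθ] at h1
  simp only [← hs] at h1
  have h2 : kd (fun i => a i ^ (T + 1)) (fun τ => Ideal.Quotient.mk I (s τ)) σ =
      Ideal.Quotient.mk I (kd (fun i => a i ^ (T + 1)) s σ) :=
    (kd_map _ (Submodule.mkQ I) s σ).symm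
  rw [h2, Algebra.smul_def, map_one, mul_one] at h1
  exact Ideal.Quotient.eq.1 h1
end Lower

/-! ### Lower bounds from subgraphs -/

section LowerBound
variable {K : Type} [Field K] {n : ℕ}

theorem xv_eq {i : ℕ} (h : i - 1 < n) : xv K n i = X ⟨i - 1, h⟩ := dif_pos h

variable (K n) in
/-- The ideal generated by the products `x_i x_j`, `(i, j) ∈ S`. For `S = lexSegSet n u v` it is
`lexSegIdeal K n u v` by definition. -/
noncomputable def edgeIdeal (S : Set (ℕ × ℕ)) : Ideal (MvPolynomial (Fin n) K) :=
  Ideal.span ((fun w : ℕ × ℕ => xv K n w.1 * xv K n w.2) '' S)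

theorem mem_edgeIdeal {S : Set (ℕ × ℕ)} {i j : ℕ} (h : (i, j) ∈ S ∨ (j, i) ∈ S) :
    xv K n i * xv K n j ∈ edgeIdeal K n S := by
  rcases h with h | h
  · exact Ideal.subset_span ⟨_, h, rfl⟩
  · rw [mul_comm]; exact Ideal.subset_span ⟨_, h, rfl⟩

theorem regFam_xv {W : Finset ℕ} (hW : ∀ i ∈ W, 1 ≤ i ∧ i ≤ n) (L : ℕ) :
    RegFam (MvPolynomial (Fin n) K) (fun i => xv K n i ^ L) W := by
  rcases Nat.eq_zero_or_pos n with rfl | hn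
  · intro V i _ hi; have := hW i hi; omega
  · have e : ∀ i ∈ W, xv K n i = X (⟨(i - 1) % n, Nat.mod_lt _ hn⟩ : Fin n) := by
      intro i hi
      have h := hW i hi
      have h1 : i - 1 < n := by omega
      rw [xv_eq h1]; simp only [Nat.mod_eq_of_lt h1]
    have := regFam_X_pow (K := K) (fun i => (⟨(i - 1) % n, Nat.mod_lt _ hn⟩ : Fin n)) W (by
      intro i hi j hj h
      have h1 := hW i hi
      have h2 := hW j hj
      rw [Fin.mk.injEq, Nat.mod_eq_of_lt (by omega), Nat.mod_eq_of_lt (by omega)] at h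
      omega) L
    intro V i hV hi hiV y
    have h2 := this V i hV hi hiV y
    have e2 : (fun i => xv K n i ^ L) '' (V : Set ℕ) =
        (fun i => X (⟨(i - 1) % n, Nat.mod_lt _ hn⟩ : Fin n) ^ L) '' (V : Set ℕ) :=
      Set.image_congr fun i hi => by rw [e i (hV hi)]
    rw [e2]
    simp only at h2
    rw [← e i hi] at h2
    exact h2

/-- If `A` is an independent set of the graph `S`, and each vertex of `W` has a neighbour in `A`,
then `#W ≤ r`. Otherwise `TorsionRes.obstruction`, applied in degree `0` to the constant
`∏ i ∈ A, x_i`, would put a power of this monomial in the edge ideal; but that ideal vanishes at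
the indicator point of `A`. -/
theorem card_le_of_independent {S : Set (ℕ × ℕ)} {r : ℕ} (C : TorsionRes (edgeIdeal K n S) r)
    (hS : ∀ w ∈ S, validPair n w) (A W : Finset ℕ) (hA : ∀ i ∈ A, 1 ≤ i ∧ i ≤ n)
    (hW : ∀ i ∈ W, 1 ≤ i ∧ i ≤ n) (hAi : ∀ i ∈ A, ∀ j ∈ A, (i, j) ∉ S)
    (hAW : ∀ j ∈ W, ∃ i ∈ A, (i, j) ∈ S ∨ (j, i) ∈ S) : W.card ≤ r := by
  by_contra! hlt
  have key : ∀ j ∈ W, (∏ i ∈ A, xv K n i) * xv K n j ∈ edgeIdeal K n S := by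
    intro j hj
    obtain ⟨i, hi, hij⟩ := hAW j hj
    rw [← Finset.mul_prod_erase A _ hi, mul_right_comm]
    exact Ideal.mul_mem_right _ _ (mem_edgeIdeal hij)
  obtain ⟨T, s, hs⟩ := C.obstruction (xv K n) W 0 (∏ i ∈ A, xv K n i) (fun _ => ∏ i ∈ A, xv K n i)
    (regFam_xv hW) (by
      intro σ hσ hc
      obtain ⟨j, rfl⟩ := Finset.card_eq_one.1 (by simpa using hc)
      have hj := key j (hσ (Finset.mem_singleton_self j))
      right
      constructor
      · rw [kd, Finset.sum_singleton, smul_eq_mul, mul_assoc, mul_comm (xv K n j)]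
        exact Ideal.mul_mem_left _ _ hj
      · simpa using hj) (by omega)
  have h := hs ∅ (Finset.empty_subset _) rfl
  rw [kd, Finset.sum_empty, sub_zero, Finset.prod_empty, mul_one, ← pow_succ] at h
  let φ : MvPolynomial (Fin n) K →+* K := eval fun i => if (i : ℕ) + 1 ∈ A then 1 else 0
  have hφ : ∀ i, 1 ≤ i → i ≤ n → φ (xv K n i) = if i ∈ A then 1 else 0 := by
    intro i h1 h2
    rw [xv_eq (by omega)]
    simp [φ, Nat.sub_add_cancel h1]
  have hker : edgeIdeal K n S ≤ RingHom.ker φ := by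
    refine Ideal.span_le.2 ?_
    rintro _ ⟨w, hw, rfl⟩
    obtain ⟨h1, h2, h3⟩ := hS w hw
    change φ _ = 0
    rw [map_mul, hφ _ h1 (by omega), hφ _ (by omega) h3]
    by_cases h4 : w.1 ∈ A
    · by_cases h5 : w.2 ∈ A
      · exact absurd hw (hAi _ h4 _ h5)
      · simp [h5]
    · simp [h4]
  have h1 : φ ((∏ i ∈ A, xv K n i) ^ (T + 1)) = 0 := hker h
  rw [map_pow, map_prod, Finset.prod_eq_one, one_pow] at h1
  · exact one_ne_zero h1
  · intro i hi
    rw [hφ i (hA i hi).1 (hA i hi).2, if_pos hi]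

/-- If `W` is split by `V` into two nonempty parts and all edges between the parts are in `S`,
then `#W ≤ r + 1`. Otherwise `TorsionRes.obstruction` applies in degree `1` to the cochain `κ` with
`κ {i} = x_i` for `i ∈ V` and `κ {i} = 0` for `i ∉ V`. It yields a single polynomial `s ∅` which, on
restriction to the `i`-th coordinate axis (where the edge ideal vanishes), equals `1` for `i ∈ V`
and `0` for `i ∉ V`. Its constant coefficient cannot be both. -/
theorem card_le_of_join {S : Set (ℕ × ℕ)} {r : ℕ} (C : TorsionRes (edgeIdeal K n S) r)
    (hS : ∀ w ∈ S, validPair n w) (V W : Finset ℕ)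
    (hW : ∀ i ∈ W, 1 ≤ i ∧ i ≤ n) {v w : ℕ} (hv : v ∈ W) (hvV : v ∈ V) (hw : w ∈ W) (hwV : w ∉ V)
    (hcross : ∀ i ∈ W, ∀ j ∈ W, i ∈ V → j ∉ V → (i, j) ∈ S ∨ (j, i) ∈ S) : W.card ≤ r + 1 := by
  classical
  by_contra! hlt
  let κ : Finset ℕ → MvPolynomial (Fin n) K := fun σ => ∑ i ∈ σ, if i ∈ V then xv K n i else 0
  have hκ1 : ∀ i, κ {i} = if i ∈ V then xv K n i else 0 := fun i => Finset.sum_singleton _ _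
  obtain ⟨T, s, hs⟩ := C.obstruction (xv K n) W 1 1 κ
    (regFam_xv hW) (by
      intro σ hσ hc
      obtain ⟨i, j, hij, rfl⟩ : ∃ i j, i < j ∧ σ = insert j {i} := by
        obtain ⟨i, j, hij, rfl⟩ := Finset.card_eq_two.1 hc
        rcases lt_or_gt_of_ne hij with h | h
        · exact ⟨i, j, h, Finset.pair_comm _ _⟩
        · exact ⟨j, i, h, rfl⟩
      have hi : i ∈ W := hσ (by simp)
      have hj : j ∈ W := hσ (by simp)
      have hp : ∏ l ∈ insert j {i}, xv K n l = xv K n j * xv K n i := by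
        rw [Finset.prod_insert (by simpa using hij.ne'), Finset.prod_singleton]
      have hk : kd (xv K n) κ (insert j {i}) =
          xv K n i * (if j ∈ V then xv K n j else 0) - xv K n j * (if i ∈ V then xv K n i else 0) := by
        rw [kd_insert _ _ (by simpa using hij)]
        simp only [kd, ksgn, hκ1, Finset.sum_singleton, Finset.erase_singleton, smul_eq_mul,
          Finset.card_singleton, insert_empty_eq, Finset.filter_singleton, lt_irrefl, if_false,
          Finset.card_empty]
        ring
      rw [hk, one_mul, hp]
      by_cases h1 : i ∈ V <;> by_cases h2 : j ∈ V
      · left; simp only [h1, h2, if_true]; ring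
      · right
        have := mem_edgeIdeal (K := K) (n := n) (hcross i hi j hj h1 h2)
        rw [mul_comm] at this
        refine ⟨?_, this⟩
        simpa [h1, h2] using this
      · right
        have := mem_edgeIdeal (K := K) (n := n) (hcross j hj i hi h2 h1)
        refine ⟨?_, this⟩
        rw [mul_comm] at this
        simpa [h1, h2] using this
      · left; simp [h1, h2]) (by omega)
  have key : ∀ i ∈ W, constantCoeff (s ∅) = if i ∈ V then (1 : K) else 0 := by
    intro i hi
    have h := hs {i} (by simpa using hi) (by simp)
    have e : kd (fun i => xv K n i ^ (T + 1)) s {i} = xv K n i ^ (T + 1) * s ∅ := by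
      simp [kd, ksgn, Finset.filter_singleton]
    rw [e, Finset.prod_singleton, one_mul] at h
    let φ : MvPolynomial (Fin n) K →ₐ[K] Polynomial K :=
      aeval fun l => if (l : ℕ) + 1 = i then Polynomial.X else 0
    have hφ : ∀ j, 1 ≤ j → j ≤ n → φ (xv K n j) = if j = i then Polynomial.X else 0 := by
      intro j h1 h2
      rw [xv_eq (by omega)]
      simp [φ, Nat.sub_add_cancel h1]
    have hker : edgeIdeal K n S ≤ RingHom.ker φ := by
      refine Ideal.span_le.2 ?_
      rintro _ ⟨w, hw, rfl⟩
      obtain ⟨h1, h2, h3⟩ := hS w hw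
      change φ _ = 0
      rw [map_mul, hφ _ h1 (by omega), hφ _ (by omega) h3]
      by_cases h4 : w.1 = i
      · rw [if_neg (c := w.2 = i) (by omega), mul_zero]
      · rw [if_neg h4, zero_mul]
    have h1 : φ (xv K n i ^ T * κ {i} - xv K n i ^ (T + 1) * s ∅) = 0 := hker h
    have hκi : φ (κ {i}) = Polynomial.X * (if i ∈ V then 1 else 0) := by
      rw [hκ1]
      split_ifs
      · rw [hφ i (hW i hi).1 (hW i hi).2, if_pos rfl, mul_one]
      · simp
    rw [map_sub, map_mul, map_mul, map_pow, map_pow, hφ i (hW i hi).1 (hW i hi).2, if_pos rfl, hκi]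
      at h1
    have h2 : (Polynomial.X : Polynomial K) ^ (T + 1) * ((if i ∈ V then 1 else 0) - φ (s ∅)) = 0 := by
      linear_combination h1
    have h3 := (mul_eq_zero.1 h2).resolve_left (pow_ne_zero _ Polynomial.X_ne_zero)
    have h4 : constantCoeff (s ∅) = Polynomial.eval 0 (φ (s ∅)) := by
      have : (constantCoeff : MvPolynomial (Fin n) K →+* K) =
          (Polynomial.evalRingHom 0).comp φ.toRingHom := by
        apply MvPolynomial.ringHom_ext
        · intro c; simp [φ]
        · intro l; simp only [constantCoeff_X, φ]
          simp only [AlgHom.toRingHom_eq_coe, RingHom.coe_comp, RingHom.coe_coe,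
            Function.comp_apply, aeval_X]
          split_ifs <;> simp
      rw [this]; rfl
    rw [h4, ← sub_eq_zero.1 h3]
    split_ifs <;> simp
  have h1 := key v hv
  have h2 := key w hw
  rw [if_pos hvV] at h1
  rw [if_neg hwV] at h2
  exact one_ne_zero (h1.symm.trans h2)
end LowerBound

/-! ### Generators up to radical -/

/-- The Schmitt–Vogel lemma. Sort the generators into `N` levels so that the product of two
distinct generators of the same level is divisible by a generator of a lower level. Then the sums
of the levels generate the ideal up to radical. -/
theorem schmittVogel {R : Type} [CommRing R] {ι : Type} [DecidableEq ι] (S : Finset ι) (m : ι → R)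
    (ℓ : ι → ℕ) (b N : ℕ) (hℓ : ∀ w ∈ S, b ≤ ℓ w ∧ ℓ w < b + N)
    (hdvd : ∀ w ∈ S, ∀ w' ∈ S, w ≠ w' → ℓ w = ℓ w' → ∃ w'' ∈ S, ℓ w'' < ℓ w ∧ m w'' ∣ m w * m w') :
    ∃ f : Fin N → R, (∀ t, f t ∈ Ideal.span (m '' S)) ∧
      (Ideal.span (Set.range f)).radical = (Ideal.span (m '' S)).radical := by
  let f : Fin N → R := fun t => ∑ w ∈ S with ℓ w = b + t, m w
  have hf : ∀ t, f t ∈ Ideal.span (m '' S) := fun t =>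
    Submodule.sum_mem _ fun w hw => Ideal.subset_span ⟨w, (Finset.mem_filter.1 hw).1, rfl⟩
  refine ⟨f, hf, le_antisymm (Ideal.radical_mono (Ideal.span_le.2 ?_)) ?_⟩
  · rintro _ ⟨t, rfl⟩; exact hf t
  · rw [Ideal.radical_le_radical_iff, Ideal.span_le]
    have key : ∀ l, ∀ w ∈ S, ℓ w = l → m w ∈ (Ideal.span (Set.range f)).radical := by
      intro l
      induction l using Nat.strong_induction_on with
      | _ l ih =>
        intro w hw hl
        obtain ⟨h1, h2⟩ := hℓ w hw
        have hft : f ⟨ℓ w - b, by omega⟩ = m w + ∑ w' ∈ (S.filter (ℓ · = ℓ w)).erase w, m w' := by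
          have hm : w ∈ S.filter (ℓ · = ℓ w) := Finset.mem_filter.2 ⟨hw, rfl⟩
          rw [Finset.add_sum_erase _ _ hm]
          simp only [f]; congr 2; funext x; rw [Nat.add_sub_cancel' h1]
        have h3 : m w ^ 2 ∈ (Ideal.span (Set.range f)).radical := by
          have : m w ^ 2 = m w * f ⟨ℓ w - b, by omega⟩ -
              ∑ w' ∈ (S.filter (ℓ · = ℓ w)).erase w, m w * m w' := by
            rw [hft, ← Finset.mul_sum]; ring
          rw [this]
          refine Ideal.sub_mem _ (Ideal.mul_mem_left _ _
            (Ideal.le_radical (Ideal.subset_span ⟨_, rfl⟩))) (Ideal.sum_mem _ fun w' hw' => ?_)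
          rw [Finset.mem_erase, Finset.mem_filter] at hw'
          obtain ⟨w'', hS, hlt, hd⟩ := hdvd w hw w' hw'.2.1 hw'.1.symm hw'.2.2.symm
          exact Ideal.mem_of_dvd _ hd (ih _ (hl ▸ hlt) w'' hS rfl)
        exact (Ideal.radical_isRadical _) ⟨2, h3⟩
    rintro _ ⟨w, hw, rfl⟩
    exact key _ w hw rfl

section Levels
variable {K : Type} [Field K] {n : ℕ}

/-- `schmittVogel` for edge ideals: for two edges of the same level, an edge `(p, q)` joining an
endpoint of one to an endpoint of the other must have lower level. -/
theorem exists_generators_of_levels {S : Set (ℕ × ℕ)} (hS : ∀ w ∈ S, validPair n w)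
    (ℓ : ℕ → ℕ → ℕ) (b N : ℕ) (hℓ : ∀ i j, (i, j) ∈ S → b ≤ ℓ i j ∧ ℓ i j < b + N)
    (hdvd : ∀ i j s t, (i, j) ∈ S → (s, t) ∈ S → lexGT (i, j) (s, t) → ℓ i j = ℓ s t →
      ∃ p q, (p, q) ∈ S ∧ ℓ p q < ℓ i j ∧
        ((p = i ∨ p = j) ∧ (q = s ∨ q = t) ∨ (p = s ∨ p = t) ∧ (q = i ∨ q = j))) :
    ∃ f : Fin N → MvPolynomial (Fin n) K, (∀ t, f t ∈ edgeIdeal K n S) ∧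
      (Ideal.span (Set.range f)).radical = (edgeIdeal K n S).radical := by
  classical
  have hfin : S.Finite := by
    refine ((Set.finite_Icc 1 n).prod (Set.finite_Icc 1 n)).subset fun w hw => ?_
    obtain ⟨h1, h2, h3⟩ := hS w hw
    exact ⟨⟨h1, by omega⟩, ⟨by omega, h3⟩⟩
  have hdiv : ∀ i j s t p q : ℕ,
      ((p = i ∨ p = j) ∧ (q = s ∨ q = t) ∨ (p = s ∨ p = t) ∧ (q = i ∨ q = j)) →
      xv K n p * xv K n q ∣ (xv K n i * xv K n j) * (xv K n s * xv K n t) := by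
    have h0 : ∀ i j p : ℕ, (p = i ∨ p = j) → xv K n p ∣ xv K n i * xv K n j := by
      rintro i j p (rfl | rfl)
      · exact dvd_mul_right _ _
      · exact dvd_mul_left _ _
    rintro i j s t p q (⟨h1, h2⟩ | ⟨h1, h2⟩)
    · exact mul_dvd_mul (h0 _ _ _ h1) (h0 _ _ _ h2)
    · rw [mul_comm (xv K n p)]; exact mul_dvd_mul (h0 _ _ _ h2) (h0 _ _ _ h1)
  have := schmittVogel hfin.toFinset (fun w : ℕ × ℕ => xv K n w.1 * xv K n w.2)
    (fun w => ℓ w.1 w.2) b N (fun w hw => hℓ _ _ (hfin.mem_toFinset.1 hw)) (by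
      rintro ⟨i, j⟩ hw ⟨s, t⟩ hw' hne hl
      rw [hfin.mem_toFinset] at hw hw'
      simp only at hl
      have hlex : lexGT (i, j) (s, t) ∨ lexGT (s, t) (i, j) := by
        simp only [lexGT]
        by_contra! h
        exact hne (Prod.ext (by omega) (by omega))
      rcases hlex with h | h
      · obtain ⟨p, q, h1, h2, h3⟩ := hdvd i j s t hw hw' h hl
        exact ⟨(p, q), hfin.mem_toFinset.2 h1, h2, hdiv _ _ _ _ _ _ h3⟩
      · obtain ⟨p, q, h1, h2, h3⟩ := hdvd s t i j hw' hw h hl.symm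
        refine ⟨(p, q), hfin.mem_toFinset.2 h1, hl ▸ h2, hdiv _ _ _ _ _ _ h3.symm⟩)
  rw [hfin.coe_toFinset] at this
  exact this

theorem mem_lexSegSet {a b c d i j : ℕ} : (i, j) ∈ lexSegSet n (a, b) (c, d) ↔
    (1 ≤ i ∧ i < j ∧ j ≤ n) ∧ (a < i ∨ a = i ∧ b ≤ j) ∧ (i < c ∨ i = c ∧ j ≤ d) := Iff.rfl

theorem generators_star {a b d : ℕ} :
    ∃ f : Fin (d - b + 1) → MvPolynomial (Fin n) K,
      (∀ t, f t ∈ lexSegIdeal K n (a, b) (a, d)) ∧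
      (Ideal.span (Set.range f)).radical = (lexSegIdeal K n (a, b) (a, d)).radical := by
  refine exists_generators_of_levels (fun w hw => hw.1) (fun _ j => j) b _ ?_ ?_
  · intro i j h; rw [mem_lexSegSet] at h; omega
  · intro i j s t h h' hlex hl
    rw [mem_lexSegSet] at h h'; simp only [lexGT] at hlex; omega

theorem generators_double {a b d : ℕ} (hd : a + 1 < d) (hb : b ≤ n) :
    ∃ f : Fin ((n - b + 1) + (d - (a + 1))) → MvPolynomial (Fin n) K,
      (∀ t, f t ∈ lexSegIdeal K n (a, b) (a + 1, d)) ∧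
      (Ideal.span (Set.range f)).radical = (lexSegIdeal K n (a, b) (a + 1, d)).radical := by
  refine exists_generators_of_levels (fun w hw => hw.1)
    (fun i j => if i = a then j - b else (n - b + 1) + (j - (a + 2))) 0 _ ?_ ?_
  · intro i j h; rw [mem_lexSegSet] at h; split_ifs <;> omega
  · intro i j s t h h' hlex hl
    rw [mem_lexSegSet] at h h'; simp only [lexGT] at hlex
    split_ifs at hl <;> omega

/-- The number `k` cuts `a, …, n` into two parts, all edges between which are present. A cross edge
gets as level the sum of the positions of its endpoints in the two parts, with `a` placed last in
its part; two cross edges of one level are then uncrossed to a lower one. An edge `x_i x_j`, `i < j`,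
inside the right part gets the level of the cross edge `x_a x_j`, and one inside the left part the
level of the cross edge at `n` and the later of its endpoints (in the order with `a` last). -/
theorem generators_join {a b c d k : ℕ} (hac : a < c) (hab : a < b)
    (hk : k = c - 1 ∧ b ≤ c ∨ k = c ∧ b = c + 1 ∧ d = n) (hcd : c < d) (hd : d ≤ n) (ha : 1 ≤ a) :
    ∃ f : Fin (n - a) → MvPolynomial (Fin n) K,
      (∀ t, f t ∈ lexSegIdeal K n (a, b) (c, d)) ∧
      (Ideal.span (Set.range f)).radical = (lexSegIdeal K n (a, b) (c, d)).radical := by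
  refine exists_generators_of_levels (fun w hw => hw.1)
    (fun i j => if k < i then j - a + 1
      else if k < j then (if i = a then k - a + 1 else i - a) + (j - k)
      else (n - k) + (if i = a then k - a + 1 else j - a)) 2 _ ?_ ?_
  · intro i j h; rw [mem_lexSegSet] at h; split_ifs <;> omega
  · intro i j s t h h' hlex hl
    rw [mem_lexSegSet] at h h'; simp only [lexGT] at hlex
    simp only [mem_lexSegSet]
    split_ifs at hl <;> first
      | omega
      | (refine ⟨i, t, ?_⟩; split_ifs <;> omega)
      | (refine ⟨s, j, ?_⟩; split_ifs <;> omega)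
      | (refine ⟨i, s, ?_⟩; split_ifs <;> omega)
      | (refine ⟨j, t, ?_⟩; split_ifs <;> omega)

/-- The levels are as in `generators_join` for the cut after `c`, except that the cross edges at
`a` and at `c` are incomplete: `a` lacks the neighbours before `b`, and `c` those after `d`. Both
vertices get position `c - a`, saving one level, and the edges `x_c x_j` with `b ≤ j`, which collide
with `x_a x_j`, are raised by one. -/
theorem generators_of_lt {a b c d : ℕ} (hac : a < c) (hcb : c < b) (hd : d < n)
    (hcd : c < d) :
    ∃ f : Fin (n - a - 1) → MvPolynomial (Fin n) K,
      (∀ t, f t ∈ lexSegIdeal K n (a, b) (c, d)) ∧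
      (Ideal.span (Set.range f)).radical = (lexSegIdeal K n (a, b) (c, d)).radical := by
  refine exists_generators_of_levels (fun w hw => hw.1)
    (fun i j => if j ≤ c then (n - c) + (j - a)
      else if i = a then (c - a) + (j - c)
      else if i = c ∧ b ≤ j then (c - a) + (j - c) + 1
      else (i - a) + (j - c)) 2 _ ?_ ?_
  · intro i j h; rw [mem_lexSegSet] at h; split_ifs <;> omega
  · intro i j s t h h' hlex hl
    rw [mem_lexSegSet] at h h'; simp only [lexGT] at hlex
    simp only [mem_lexSegSet]
    split_ifs at hl <;> first
      | omega
      | (refine ⟨i, t, ?_⟩; split_ifs <;> omega)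
      | (refine ⟨s, j, ?_⟩; split_ifs <;> omega)
      | (refine ⟨i, s, ?_⟩; split_ifs <;> omega)

/-- The levels are as in `generators_join` for the cut after `c`, but the right part is ordered
decreasingly, so that `a` is not joined to the vertices in the last positions and no edge needs the
top level. -/
theorem generators_of_eq {a b c : ℕ} (hac : a < c) (hcb : c + 2 ≤ b) (hcn : b ≤ n) :
    ∃ f : Fin (n - a - 1) → MvPolynomial (Fin n) K,
      (∀ t, f t ∈ lexSegIdeal K n (a, b) (c, n)) ∧
      (Ideal.span (Set.range f)).radical = (lexSegIdeal K n (a, b) (c, n)).radical := by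
  refine exists_generators_of_levels (fun w hw => hw.1)
    (fun i j => if j ≤ c then (n - c) + (j - a)
      else if i = a then (c - a) + (n + 1 - j) + 1
      else (i - a) + (n + 1 - j)) 2 _ ?_ ?_
  · intro i j h; rw [mem_lexSegSet] at h; split_ifs <;> omega
  · intro i j s t h h' hlex hl
    rw [mem_lexSegSet] at h h'; simp only [lexGT] at hlex
    simp only [mem_lexSegSet]
    split_ifs at hl <;> first
      | omega
      | (refine ⟨i, t, ?_⟩; split_ifs <;> omega)
      | (refine ⟨s, j, ?_⟩; split_ifs <;> omega)
      | (refine ⟨i, s, ?_⟩; split_ifs <;> omega)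
end Levels

/-! ### Projective dimension and colon ideals -/

section ProjDim
open CategoryTheory

/-- `R ⧸ J` has projective dimension at most `p`. -/
def PdLE {R : Type} [CommRing R] (J : Ideal R) (p : ℕ) : Prop :=
  HasProjectiveDimensionLT (ModuleCat.of R (R ⧸ J)) (p + 1)

theorem PdLE.mono {R : Type} [CommRing R] {J : Ideal R} {p q : ℕ} (h : PdLE J p) (hpq : p ≤ q) :
    PdLE J q := by
  have : HasProjectiveDimensionLT (ModuleCat.of R (R ⧸ J)) (p + 1) := h
  exact hasProjectiveDimensionLT_of_ge _ (p + 1) _ (by omega)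

/-- The short exact sequence `0 → R ⧸ (J : x) → R ⧸ J → R ⧸ (J + (x)) → 0`, whose first map is
multiplication by `x`. -/
theorem exists_shortExact_colon {R : Type} [CommRing R] {J J₁ J₂ : Ideal R} {x : R}
    (h₁ : ∀ y, y ∈ J₁ ↔ x * y ∈ J) (h₂ : J₂ = J ⊔ Ideal.span {x}) :
    ∃ S : ShortComplex (ModuleCat.{0} R), S.ShortExact ∧ S.X₁ = ModuleCat.of R (R ⧸ J₁) ∧
      S.X₂ = ModuleCat.of R (R ⧸ J) ∧ S.X₃ = ModuleCat.of R (R ⧸ J₂) := by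
  let f : (R ⧸ J₁) →ₗ[R] (R ⧸ J) := J₁.mapQ J (LinearMap.lsmul R R x) fun y hy => (h₁ y).1 hy
  let g : (R ⧸ J) →ₗ[R] (R ⧸ J₂) := J.mapQ J₂ LinearMap.id fun y hy => h₂ ▸ Ideal.mem_sup_left hy
  have hgf : g ∘ₗ f = 0 := by
    ext
    change Submodule.Quotient.mk _ = _
    refine (Submodule.Quotient.mk_eq_zero _).2 ?_
    rw [h₂]
    refine Ideal.mem_sup_right ?_
    exact Ideal.mul_mem_right _ _ (Ideal.mem_span_singleton_self x)
  refine ⟨ShortComplex.mk (ModuleCat.ofHom f) (ModuleCat.ofHom g)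
    (by rw [← ModuleCat.ofHom_comp, hgf]; rfl), ?_, rfl, rfl, rfl⟩
  refine ShortComplex.ShortExact.mk' ?_ ?_ ?_
  · rw [ShortComplex.moduleCat_exact_iff]
    intro y hy
    obtain ⟨y, rfl⟩ := Submodule.Quotient.mk_surjective _ y
    have h3 : y ∈ J₂ := (Submodule.Quotient.mk_eq_zero _).1 hy
    rw [h₂, Submodule.mem_sup] at h3
    obtain ⟨u, hu, w, hw, rfl⟩ := h3
    obtain ⟨z, rfl⟩ := Ideal.mem_span_singleton'.1 hw
    refine ⟨Submodule.Quotient.mk z, ?_⟩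
    change Submodule.Quotient.mk (x * z) = _
    rw [Submodule.Quotient.eq]
    have : x * z - (u + z * x) = -u := by ring
    rw [this]; exact neg_mem hu
  · rw [ModuleCat.mono_iff_injective]
    change Function.Injective f
    rw [injective_iff_map_eq_zero]
    intro y hy
    obtain ⟨y, rfl⟩ := Submodule.Quotient.mk_surjective _ y
    exact (Submodule.Quotient.mk_eq_zero _).2 ((h₁ y).2 ((Submodule.Quotient.mk_eq_zero _).1 hy))
  · rw [ModuleCat.epi_iff_surjective]
    intro y
    obtain ⟨y, rfl⟩ := Submodule.Quotient.mk_surjective _ y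
    exact ⟨Submodule.Quotient.mk y, rfl⟩

theorem PdLE.of_colon {R : Type} [CommRing R] {J J₁ J₂ : Ideal R} {x : R} {p : ℕ}
    (h₁ : ∀ y, y ∈ J₁ ↔ x * y ∈ J) (h₂ : J₂ = J ⊔ Ideal.span {x}) (H₁ : PdLE J₁ p)
    (H₂ : PdLE J₂ p) : PdLE J p := by
  obtain ⟨S, hS, e1, e2, e3⟩ := exists_shortExact_colon h₁ h₂
  unfold PdLE at *
  rw [← e1] at H₁; rw [← e3] at H₂; rw [← e2]
  exact hS.hasProjectiveDimensionLT_X₂ _ H₁ H₂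

/-- Adjoining a nonzerodivisor modulo `J` raises the bound on the projective dimension by one. -/
theorem PdLE.sup_span_singleton {R : Type} [CommRing R] {J J₂ : Ideal R} {x : R} {p : ℕ}
    (h₁ : ∀ y, y ∈ J ↔ x * y ∈ J) (h₂ : J₂ = J ⊔ Ideal.span {x}) (H : PdLE J p) :
    PdLE J₂ (p + 1) := by
  obtain ⟨S, hS, e1, e2, e3⟩ := exists_shortExact_colon h₁ h₂
  have H' := H.mono (Nat.le_succ p)
  unfold PdLE at *
  rw [← e1] at H; rw [← e2] at H'; rw [← e3]
  exact hS.hasProjectiveDimensionLT_X₃ _ H H'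

theorem PdLE.bot {R : Type} [CommRing R] : PdLE (⊥ : Ideal R) 0 := by
  unfold PdLE
  rw [zero_add, ← projective_iff_hasProjectiveDimensionLT_one, ← IsProjective.iff_projective]
  exact Module.Projective.of_equiv (Submodule.quotEquivOfEqBot (⊥ : Ideal R) rfl).symm
end ProjDim

/-! ### Ideals generated by variables and edges -/

section GraphIdeal
variable {K : Type} [Field K] {n : ℕ}

/-- The set of variables dividing the monomial with exponent `m`, numbered from `1`. -/
def vsupp (m : Fin n →₀ ℕ) : Finset ℕ := m.support.image fun i : Fin n => (i : ℕ) + 1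

theorem vsupp_mono {m m' : Fin n →₀ ℕ} (h : m ≤ m') : vsupp m ⊆ vsupp m' :=
  Finset.image_subset_image (Finsupp.support_mono h)

theorem vsupp_single_add {v : ℕ} (h1 : 1 ≤ v) (h : v - 1 < n) (m : Fin n →₀ ℕ) :
    vsupp (Finsupp.single ⟨v - 1, h⟩ 1 + m) = insert v (vsupp m) := by
  ext w
  simp only [vsupp, Finset.mem_image, Finset.mem_insert, Finsupp.mem_support_iff, Finsupp.add_apply,
    Finsupp.single_apply]
  constructor
  · rintro ⟨i, hi, rfl⟩
    by_cases e : (⟨v - 1, h⟩ : Fin n) = i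
    · left; rw [← e]; simp only; omega
    · right; exact ⟨i, by simpa [e] using hi, rfl⟩
  · rintro (rfl | ⟨i, hi, rfl⟩)
    · exact ⟨⟨w - 1, h⟩, by simp, by simp only; omega⟩
    · exact ⟨i, by omega, rfl⟩

/-- A squarefree monomial with variables `T` lies in the monomial ideal generated by the `x_w`,
`w ∈ A`, and the `x_i x_j` for edges of `G` inside `V`. -/
def Meets (G : SimpleGraph ℕ) (V A T : Finset ℕ) : Prop :=
  (∃ w ∈ A, w ∈ T) ∨ ∃ i ∈ V, ∃ j ∈ V, G.Adj i j ∧ i ∈ T ∧ j ∈ T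

theorem Meets.mono {G : SimpleGraph ℕ} {V A T T' : Finset ℕ} (h : Meets G V A T) (hT : T ⊆ T') :
    Meets G V A T' := by
  rcases h with ⟨w, h1, h2⟩ | ⟨i, h1, j, h2, h3, h4, h5⟩
  · exact Or.inl ⟨w, h1, hT h2⟩
  · exact Or.inr ⟨i, h1, j, h2, h3, hT h4, hT h5⟩

variable (K n) in
/-- The ideal generated by the `x_w`, `w ∈ A`, and the `x_i x_j` for edges of `G` inside `V`,
defined as the set of polynomials each of whose monomials is divisible by such a generator. -/
def gIdeal (G : SimpleGraph ℕ) (V A : Finset ℕ) : Ideal (MvPolynomial (Fin n) K) where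
  carrier := {y | ∀ m ∈ y.support, Meets G V A (vsupp m)}
  zero_mem' := by simp
  add_mem' {x y} hx hy m hm := by
    classical
    rcases Finset.mem_union.1 (support_add hm) with h | h
    · exact hx m h
    · exact hy m h
  smul_mem' c x hx m hm := by
    classical
    rw [smul_eq_mul] at hm
    obtain ⟨u, _, w, hw, rfl⟩ := Finset.mem_add.1 (support_mul _ _ hm)
    exact (hx w hw).mono (vsupp_mono le_add_self)

variable {G : SimpleGraph ℕ} {V A : Finset ℕ}

theorem mem_gIdeal {y : MvPolynomial (Fin n) K} :
    y ∈ gIdeal K n G V A ↔ ∀ m ∈ y.support, Meets G V A (vsupp m) := Iff.rfl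

theorem xv_mul_mem_gIdeal {v : ℕ} (h1 : 1 ≤ v) (h2 : v ≤ n) {y : MvPolynomial (Fin n) K} :
    xv K n v * y ∈ gIdeal K n G V A ↔ ∀ m ∈ y.support, Meets G V A (insert v (vsupp m)) := by
  have h : v - 1 < n := by omega
  rw [mem_gIdeal, xv_eq h, support_X_mul]
  simp only [Finset.mem_map, forall_exists_index, and_imp, forall_apply_eq_imp_iff₂,
    addLeftEmbedding_apply, vsupp_single_add h1 h]

/-- Adding the variable `x_v` to the ideal deletes the vertex `v` from the graph. -/
theorem gIdeal_insert {v : ℕ} (h1 : 1 ≤ v) (h2 : v ≤ n) :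
    gIdeal K n G (V.erase v) (insert v A) = gIdeal K n G V A ⊔ Ideal.span {xv K n v} := by
  have h : v - 1 < n := by omega
  apply le_antisymm
  · intro y hy
    rw [y.as_sum]
    refine Ideal.sum_mem _ fun m hm => ?_
    by_cases hv : v ∈ vsupp m
    · refine Ideal.mem_sup_right (Ideal.mem_span_singleton.2 ?_)
      rw [xv_eq h, X_dvd_monomial]
      right
      obtain ⟨i, hi, rfl⟩ := Finset.mem_image.1 hv
      simpa using hi
    · refine Ideal.mem_sup_left ?_
      intro m' hm'
      classical
      have := support_monomial_subset hm'
      rw [Finset.mem_singleton] at this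
      subst this
      rcases hy m' hm with ⟨w, h1, hw⟩ | ⟨i, h1, j, h2, h3, h4, h5⟩
      · rcases Finset.mem_insert.1 h1 with rfl | h1
        · exact absurd hw hv
        · exact Or.inl ⟨w, h1, hw⟩
      · exact Or.inr ⟨i, Finset.mem_of_mem_erase h1, j, Finset.mem_of_mem_erase h2, h3, h4, h5⟩
  · refine sup_le ?_ ?_
    · intro y hy m hm
      rcases hy m hm with ⟨w, h1, h2⟩ | ⟨i, h1, j, h2, h3, h4, h5⟩
      · exact Or.inl ⟨w, Finset.mem_insert_of_mem h1, h2⟩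
      · by_cases e1 : i = v
        · exact Or.inl ⟨v, Finset.mem_insert_self _ _, e1 ▸ h4⟩
        · by_cases e2 : j = v
          · exact Or.inl ⟨v, Finset.mem_insert_self _ _, e2 ▸ h5⟩
          · exact Or.inr ⟨i, Finset.mem_erase.2 ⟨e1, h1⟩, j, Finset.mem_erase.2 ⟨e2, h2⟩, h3, h4, h5⟩
    · rw [Ideal.span_singleton_le_iff_mem, ← mul_one (xv K n v), xv_mul_mem_gIdeal h1 h2]
      intro m _
      exact Or.inl ⟨v, Finset.mem_insert_self _ _, Finset.mem_insert_self _ _⟩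

/-- The colon ideal by `x_v` adjoins the neighbours `N` of `v` as variables and deletes `v` and
`N` from the graph; the sum with `(x_v)` adjoins and deletes `v`. A bound for both is a bound for
the original ideal. -/
theorem pdLE_gIdeal_step {v p : ℕ} {N : Finset ℕ} (h1 : 1 ≤ v) (h2 : v ≤ n) (hv : v ∈ V)
    (hvA : v ∉ A) (hN : ∀ w, w ∈ N ↔ w ∈ V ∧ G.Adj v w)
    (H₁ : PdLE (gIdeal K n G (V.erase v \ N) (A ∪ N)) p)
    (H₂ : PdLE (gIdeal K n G (V.erase v) (insert v A)) p) : PdLE (gIdeal K n G V A) p := by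
  refine PdLE.of_colon (x := xv K n v) (fun y => ?_) (gIdeal_insert h1 h2) H₁ H₂
  rw [xv_mul_mem_gIdeal h1 h2, mem_gIdeal]
  refine forall₂_congr fun m _ => ?_
  generalize vsupp m = T
  constructor
  · rintro (⟨w, h3, h4⟩ | ⟨i, h3, j, h4, h5, h6, h7⟩)
    · rcases Finset.mem_union.1 h3 with h3 | h3
      · exact Or.inl ⟨w, h3, Finset.mem_insert_of_mem h4⟩
      · obtain ⟨h5, h6⟩ := (hN w).1 h3
        exact Or.inr ⟨v, hv, w, h5, h6, Finset.mem_insert_self _ _, Finset.mem_insert_of_mem h4⟩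
    · simp only [Finset.mem_sdiff, Finset.mem_erase] at h3 h4
      exact Or.inr ⟨i, h3.1.2, j, h4.1.2, h5, Finset.mem_insert_of_mem h6,
        Finset.mem_insert_of_mem h7⟩
  · rintro (⟨w, h3, h4⟩ | ⟨i, h3, j, h4, h5, h6, h7⟩)
    · rcases Finset.mem_insert.1 h4 with rfl | h4
      · exact absurd h3 hvA
      · exact Or.inl ⟨w, Finset.mem_union_left _ h3, h4⟩
    · have key : ∀ w, w ∈ N → w ∈ insert v T → ∃ w ∈ A ∪ N, w ∈ T := by
        intro w h8 h9
        refine ⟨w, Finset.mem_union_right _ h8, (Finset.mem_insert.1 h9).resolve_left ?_⟩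
        rintro rfl
        exact G.loopless.irrefl _ ((hN _).1 h8).2
      by_cases e1 : i ∈ N
      · exact Or.inl (key i e1 h6)
      by_cases e2 : j ∈ N
      · exact Or.inl (key j e2 h7)
      have hi : i ≠ v := by rintro rfl; exact e2 ((hN j).2 ⟨h4, h5⟩)
      have hj : j ≠ v := by rintro rfl; exact e1 ((hN i).2 ⟨h3, h5.symm⟩)
      exact Or.inr ⟨i, by simp [hi, h3, e1], j, by simp [hj, h4, e2], h5, (Finset.mem_insert.1 h6).resolve_left hi,
        (Finset.mem_insert.1 h7).resolve_left hj⟩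

theorem pdLE_gIdeal_of_edgeless (hA : ∀ w ∈ A, 1 ≤ w ∧ w ≤ n)
    (hV : ∀ i ∈ V, ∀ j ∈ V, ¬ G.Adj i j) : PdLE (gIdeal K n G V A) A.card := by
  have : gIdeal K n G V A = gIdeal K n G ∅ A := by
    ext y
    refine forall₂_congr fun m _ => ?_
    simp only [Meets]
    constructor
    · rintro (h | ⟨i, h3, j, h4, h5, h6, h7⟩)
      · exact Or.inl h
      · exact absurd h5 (hV i h3 j h4)
    · rintro (h | ⟨i, h3, j, h4, h5, h6, h7⟩)
      · exact Or.inl h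
      · simp at h3
  rw [this]
  clear this hV
  induction A using Finset.induction_on with
  | empty =>
    have : gIdeal K n G ∅ ∅ = ⊥ := by
      rw [eq_bot_iff]
      intro y hy
      rw [Ideal.mem_bot, ← support_eq_empty, Finset.eq_empty_iff_forall_notMem]
      intro m hm
      simpa [Meets] using hy m hm
    rw [this]; exact PdLE.bot
  | insert v A hv ih =>
    rw [Finset.card_insert_of_notMem hv]
    have h := hA v (Finset.mem_insert_self _ _)
    refine PdLE.sup_span_singleton (x := xv K n v) (fun y => ?_) (gIdeal_insert (V := ∅) h.1 h.2)
      (ih fun w hw => hA w (Finset.mem_insert_of_mem hw))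
    rw [xv_mul_mem_gIdeal h.1 h.2, mem_gIdeal]
    refine forall₂_congr fun m _ => ?_
    constructor
    · exact fun h => h.mono (Finset.subset_insert _ _)
    · rintro (⟨w, h3, h4⟩ | ⟨i, h3, j, h4, h5, h6, h7⟩)
      · refine Or.inl ⟨w, h3, (Finset.mem_insert.1 h4).resolve_left ?_⟩
        rintro rfl; exact hv h3
      · simp at h3

/-- For nonempty `V` the bound is `#A + #V - 1`, whatever the graph; the truncated subtraction gives
`#A` for empty `V`. -/
theorem pdLE_gIdeal_of_card : ∀ (V A : Finset ℕ) (_ : ∀ w ∈ V, (1 ≤ w ∧ w ≤ n) ∧ w ∉ A)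
    (_ : ∀ w ∈ A, 1 ≤ w ∧ w ≤ n), PdLE (gIdeal K n G V A) (A.card + (V.card - 1)) := by
  classical
  intro V
  induction V using Finset.strongInduction with
  | H V ih =>
    intro A hV hA
    by_cases hE : ∃ i ∈ V, ∃ j ∈ V, G.Adj i j
    · obtain ⟨v, hv, w, hw, hvw⟩ := hE
      let N := V.filter (G.Adj v)
      have hN : ∀ w, w ∈ N ↔ w ∈ V ∧ G.Adj v w := fun w => Finset.mem_filter
      have hwN : w ∈ N := (hN w).2 ⟨hw, hvw⟩
      have hvN : v ∉ N := fun h => G.loopless.irrefl _ ((hN v).1 h).2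
      have hNV : N ⊆ V.erase v := fun u hu => Finset.mem_erase.2
        ⟨fun e => hvN (e ▸ hu), ((hN u).1 hu).1⟩
      have hss : V.erase v \ N ⊂ V := Finset.ssubset_of_subset_of_ssubset Finset.sdiff_subset
        (Finset.erase_ssubset hv)
      have hA' : ∀ w ∈ A ∪ N, 1 ≤ w ∧ w ≤ n := fun u hu => by
        rcases Finset.mem_union.1 hu with h | h
        · exact hA u h
        · exact (hV u ((hN u).1 h).1).1
      have c1 := Finset.card_erase_add_one hv
      have c2 := Finset.card_sdiff_add_card_eq_card hNV
      have c3 : (A ∪ N).card ≤ A.card + N.card := Finset.card_union_le _ _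
      have c4 : 1 ≤ N.card := Finset.card_pos.2 ⟨w, hwN⟩
      refine pdLE_gIdeal_step (hV v hv).1.1 (hV v hv).1.2 hv (hV v hv).2 hN ?_ ?_
      · rcases Finset.eq_empty_or_nonempty (V.erase v \ N) with h | h
        · refine (pdLE_gIdeal_of_edgeless hA' (by simp [h])).mono ?_
          rw [h, Finset.card_empty] at c2
          omega
        · refine (ih _ hss (A ∪ N) (fun u hu => ?_) hA').mono ?_
          · simp only [Finset.mem_sdiff, Finset.mem_erase] at hu
            refine ⟨(hV u hu.1.2).1, fun h => ?_⟩
            rcases Finset.mem_union.1 h with h | h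
            · exact (hV u hu.1.2).2 h
            · exact hu.2 h
          · have := Finset.card_pos.2 h
            omega
      · refine (ih _ (Finset.erase_ssubset hv) (insert v A) (fun u hu => ?_) fun u hu => ?_).mono ?_
        · have := Finset.mem_erase.1 hu
          exact ⟨(hV u this.2).1, by simp [this.1, (hV u this.2).2]⟩
        · rcases Finset.mem_insert.1 hu with rfl | h
          · exact (hV _ hv).1
          · exact hA u h
        · rw [Finset.card_insert_of_notMem (hV v hv).2]
          have : 1 ≤ (V.erase v).card := by
            have := Finset.card_le_card hNV
            omega
          omega
    · push Not at hE
      exact (pdLE_gIdeal_of_edgeless hA hE).mono (by omega)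

/-- A graph all of whose edges on `V` contain the vertex `v`, of degree `#N`. -/
theorem pdLE_gIdeal_star {v p : ℕ} {N : Finset ℕ} (hVA : ∀ w ∈ V, (1 ≤ w ∧ w ≤ n) ∧ w ∉ A)
    (hA : ∀ w ∈ A, 1 ≤ w ∧ w ≤ n) (hv : v ∈ V) (hN : ∀ w, w ∈ N ↔ w ∈ V ∧ G.Adj v w)
    (hstar : ∀ i ∈ V, ∀ j ∈ V, G.Adj i j → i = v ∨ j = v) (h1 : A.card + 1 ≤ p)
    (h2 : A.card + N.card ≤ p) : PdLE (gIdeal K n G V A) p := by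
  have hv' := hVA v hv
  have hE : ∀ i ∈ V.erase v, ∀ j ∈ V.erase v, ¬ G.Adj i j := fun i hi j hj h => by
    rw [Finset.mem_erase] at hi hj
    rcases hstar i hi.2 j hj.2 h with h | h
    · exact hi.1 h
    · exact hj.1 h
  refine pdLE_gIdeal_step hv'.1.1 hv'.1.2 hv hv'.2 hN ?_ ?_
  · refine (pdLE_gIdeal_of_edgeless (fun u hu => ?_) fun i hi j hj =>
      hE i (Finset.sdiff_subset hi) j (Finset.sdiff_subset hj)).mono
        ((Finset.card_union_le _ _).trans h2)
    rcases Finset.mem_union.1 hu with h | h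
    · exact hA u h
    · exact (hVA u ((hN u).1 h).1).1
  · refine (pdLE_gIdeal_of_edgeless (fun u hu => ?_) hE).mono
      ((Finset.card_insert_le _ _).trans h1)
    rcases Finset.mem_insert.1 hu with rfl | h
    · exact hv'.1
    · exact hA u h

theorem edgeIdeal_eq_gIdeal {S : Set (ℕ × ℕ)} (hS : ∀ w ∈ S, validPair n w) {V : Finset ℕ}
    (hV : ∀ w ∈ S, w.1 ∈ V ∧ w.2 ∈ V) :
    edgeIdeal K n S = gIdeal K n (SimpleGraph.fromRel fun i j => (i, j) ∈ S) V ∅ := by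
  apply le_antisymm
  · refine Ideal.span_le.2 ?_
    rintro _ ⟨w, hw, rfl⟩
    obtain ⟨h1, h2, h3⟩ := hS w hw
    refine (xv_mul_mem_gIdeal h1 (by omega)).2 ?_
    intro m hm
    rw [xv_eq (by omega)] at hm
    classical
    rw [support_X, Finset.mem_singleton] at hm
    have h4 := vsupp_single_add (n := n) (v := w.2) (by omega) (by omega) 0
    rw [add_zero] at h4
    rw [hm, h4]
    exact Or.inr ⟨w.1, (hV w hw).1, w.2, (hV w hw).2,
      (SimpleGraph.fromRel_adj _ _ _).2 ⟨by omega, Or.inl hw⟩, by simp, by simp⟩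
  · intro y hy
    rw [y.as_sum]
    refine Ideal.sum_mem _ fun m hm => ?_
    have key : ∀ i j, (i, j) ∈ S → i ∈ vsupp m → j ∈ vsupp m →
        monomial m (coeff m y) ∈ edgeIdeal K n S := by
      intro i j hij hi hj
      obtain ⟨h1, h2, h3⟩ := hS _ hij
      simp only at h1 h2 h3
      refine Ideal.mem_of_dvd _ ?_ (mem_edgeIdeal (K := K) (n := n) (Or.inl hij))
      rw [xv_eq (show i - 1 < n by omega), xv_eq (show j - 1 < n by omega), X, X, monomial_mul, one_mul]
      refine monomial_dvd_monomial.2 ⟨Or.inr fun l => ?_, one_dvd _⟩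
      obtain ⟨i', hi', rfl⟩ := Finset.mem_image.1 hi
      obtain ⟨j', hj', rfl⟩ := Finset.mem_image.1 hj
      have hne : i' ≠ j' := by rintro rfl; omega
      have hi0 : m i' ≠ 0 := Finsupp.mem_support_iff.1 hi'
      have hj0 : m j' ≠ 0 := Finsupp.mem_support_iff.1 hj'
      simp only [Nat.add_sub_cancel, Fin.eta, Finsupp.add_apply, Finsupp.single_apply]
      split_ifs with e1 e2 e2
      · exact absurd (e1.trans e2.symm) hne
      · subst e1; omega
      · subst e2; omega
      · omega
    rcases hy m hm with ⟨w, h1, _⟩ | ⟨i, _, j, _, h3, h4, h5⟩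
    · simp at h1
    · rcases ((SimpleGraph.fromRel_adj _ _ _).1 h3).2 with h | h
      · exact key i j h h4 h5
      · exact key j i h h5 h4
end GraphIdeal

/-! ### Upper bounds for the projective dimension -/

section PdUpper
variable {K : Type} [Field K] {n : ℕ}

/-- The graph with the lexsegment from `x_a x_b` to `x_c x_d` as its edges. -/
def lexGraph (n a b c d : ℕ) : SimpleGraph ℕ :=
  SimpleGraph.fromRel fun i j => (i, j) ∈ lexSegSet n (a, b) (c, d)

variable {a b c d : ℕ}

theorem lexGraph_adj {i j : ℕ} : (lexGraph n a b c d).Adj i j ↔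
    ((1 ≤ i ∧ i < j ∧ j ≤ n) ∧ (a < i ∨ a = i ∧ b ≤ j) ∧ (i < c ∨ i = c ∧ j ≤ d)) ∨
    ((1 ≤ j ∧ j < i ∧ i ≤ n) ∧ (a < j ∨ a = j ∧ b ≤ i) ∧ (j < c ∨ j = c ∧ i ≤ d)) := by
  rw [lexGraph, SimpleGraph.fromRel_adj, mem_lexSegSet, mem_lexSegSet]
  omega

theorem lexSegIdeal_eq_gIdeal : lexSegIdeal K n (a, b) (c, d) =
    gIdeal K n (lexGraph n a b c d) (Finset.Icc a n) ∅ := by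
  refine edgeIdeal_eq_gIdeal (fun w hw => hw.1) ?_
  rintro ⟨i, j⟩ h
  rw [mem_lexSegSet] at h
  simp only [Finset.mem_Icc]
  omega

theorem pdLE_join (ha : 1 ≤ a) (han : a < n) : PdLE (lexSegIdeal K n (a, b) (c, d)) (n - a) := by
  rw [lexSegIdeal_eq_gIdeal]
  refine (pdLE_gIdeal_of_card _ _ (fun w hw => ?_) (by simp)).mono ?_
  · rw [Finset.mem_Icc] at hw
    simp only [Finset.notMem_empty, not_false_eq_true, and_true]; omega
  · rw [Nat.card_Icc, Finset.card_empty]; omega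

theorem pdLE_star (ha : 1 ≤ a) (hab : a < b) (hbd : b ≤ d) (hd : d ≤ n) :
    PdLE (lexSegIdeal K n (a, b) (a, d)) (d - b + 1) := by
  rw [lexSegIdeal_eq_gIdeal]
  refine pdLE_gIdeal_star (v := a) (N := Finset.Icc b d) (fun w hw => ?_) (by simp) ?_
    (fun w => ?_) ?_ ?_ ?_
  · rw [Finset.mem_Icc] at hw
    simp only [Finset.notMem_empty, not_false_eq_true, and_true]; omega
  · simp only [Finset.mem_Icc]; omega
  · simp only [Finset.mem_Icc, lexGraph_adj, true_and]; omega
  · intro i hi j hj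
    simp only [Finset.mem_Icc, lexGraph_adj] at hi hj ⊢; omega
  · simp
  · rw [Nat.card_Icc, Finset.card_empty]; omega

/-- The graph is the union of the stars at `a`, with leaves `b, …, n`, and at `a + 1`, with leaves
`a + 2, …, d`; they are disjoint. -/
theorem pdLE_double (ha : 1 ≤ a) (hb : b ≤ n) (hcd : a + 1 < d) (hdb : d < b) :
    PdLE (lexSegIdeal K n (a, b) (a + 1, d)) ((n - b + 1) + (d - (a + 1))) := by
  rw [lexSegIdeal_eq_gIdeal]
  refine pdLE_gIdeal_step (v := a) (N := Finset.Icc b n) ha (by omega) ?_ (by simp)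
    (fun w => ?_) ?_ ?_
  · simp only [Finset.mem_Icc]; omega
  · simp only [Finset.mem_Icc, lexGraph_adj, true_and]; omega
  · refine pdLE_gIdeal_star (v := a + 1) (N := Finset.Icc (a + 2) d) (fun w hw => ?_)
      (fun w hw => ?_) ?_ (fun w => ?_) ?_ ?_ ?_
    · simp only [Finset.mem_Icc, Finset.mem_sdiff, Finset.mem_erase, Finset.empty_union, ne_eq] at hw ⊢
      omega
    · simp only [Finset.mem_Icc, Finset.empty_union] at hw
      omega
    · simp only [Finset.mem_Icc, Finset.mem_sdiff, Finset.mem_erase, ne_eq]; omega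
    · simp only [Finset.mem_Icc, Finset.mem_sdiff, Finset.mem_erase, lexGraph_adj, true_and, ne_eq]
      omega
    · intro i hi j hj
      simp only [Finset.mem_Icc, Finset.mem_sdiff, Finset.mem_erase, lexGraph_adj, ne_eq] at hi hj ⊢
      omega
    · rw [Finset.empty_union, Nat.card_Icc]; omega
    · rw [Finset.empty_union, Nat.card_Icc, Nat.card_Icc]; omega
  · refine pdLE_gIdeal_star (v := a + 1) (N := Finset.Icc (a + 2) d) (fun w hw => ?_)
      (fun w hw => ?_) ?_ (fun w => ?_) ?_ ?_ ?_
    · simp only [Finset.mem_Icc, Finset.mem_erase, Finset.mem_insert, Finset.notMem_empty, ne_eq, or_false] at hw ⊢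
      omega
    · simp only [Finset.mem_insert, Finset.notMem_empty, or_false] at hw
      omega
    · simp only [Finset.mem_Icc, Finset.mem_erase, ne_eq]; omega
    · simp only [Finset.mem_Icc, Finset.mem_erase, lexGraph_adj, true_and, ne_eq]; omega
    · intro i hi j hj
      simp only [Finset.mem_Icc, Finset.mem_erase, lexGraph_adj, ne_eq] at hi hj ⊢; omega
    · simp
      omega
    · rw [Nat.card_Icc]; simp

/-- The end of the recursion in `pdLE_gap`: the vertices `a + 1, …, c - 1` have been adjoined as
variables, and the remaining graph on `a, c, …, n` has only edges at `a` or at `c`. If `d < n`, the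
step at `a` is followed by the bound for arbitrary graphs and the bound for the star at `c`. If
`d = n`, the step is made at `c`. -/
theorem pdLE_base (ha : 1 ≤ a) (hac : a < c) (hcb : c < b) (hb : b ≤ n) (hcd : c < d) (hd : d ≤ n)
    (hbd : d < n ∨ c + 2 ≤ b) :
    PdLE (gIdeal K n (lexGraph n a b c d) (insert a (Finset.Icc c n)) (Finset.Icc (a + 1) (c - 1)))
      (n - a - 1) := by
  rcases Nat.lt_or_ge d n with hdn | hdn
  · refine pdLE_gIdeal_step (v := a) (N := Finset.Icc b n) ha (by omega) ?_ (by simp)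
      (fun w => ?_) ?_ ?_
    · simp
    · simp only [Finset.mem_Icc, Finset.mem_insert, lexGraph_adj, true_and]; omega
    · refine (pdLE_gIdeal_of_card _ _ (fun w hw => ?_) (fun w hw => ?_)).mono ?_
      · simp only [Finset.mem_Icc, Finset.mem_sdiff, Finset.mem_erase, Finset.mem_union,
          Finset.mem_insert, ne_eq] at hw ⊢
        omega
      · simp only [Finset.mem_Icc, Finset.mem_union] at hw
        omega
      · have h1 : (insert a (Finset.Icc c n)).erase a \ Finset.Icc b n = Finset.Icc c (b - 1) := by
          ext w
          simp only [Finset.mem_Icc, Finset.mem_sdiff, Finset.mem_erase, Finset.mem_insert, ne_eq]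
          omega
        have h2 := Finset.card_union_le (Finset.Icc (a + 1) (c - 1)) (Finset.Icc b n)
        rw [Nat.card_Icc, Nat.card_Icc] at h2
        rw [h1, Nat.card_Icc]
        omega
    · refine pdLE_gIdeal_star (v := c) (N := Finset.Icc (c + 1) d) (fun w hw => ?_)
        (fun w hw => ?_) ?_ (fun w => ?_) ?_ ?_ ?_
      · simp only [Finset.mem_Icc, Finset.mem_erase, Finset.mem_insert, ne_eq] at hw ⊢
        omega
      · simp only [Finset.mem_Icc, Finset.mem_insert] at hw
        omega
      · simp only [Finset.mem_Icc, Finset.mem_erase, Finset.mem_insert, ne_eq]; omega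
      · simp only [Finset.mem_Icc, Finset.mem_erase, Finset.mem_insert, lexGraph_adj, true_and, ne_eq]
        omega
      · intro i hi j hj
        simp only [Finset.mem_Icc, Finset.mem_erase, Finset.mem_insert, lexGraph_adj, ne_eq] at hi hj ⊢
        omega
      · rw [Finset.card_insert_of_notMem (by simp), Nat.card_Icc]; omega
      · rw [Finset.card_insert_of_notMem (by simp), Nat.card_Icc, Nat.card_Icc]; omega
  · refine pdLE_gIdeal_step (v := c) (N := Finset.Icc (c + 1) n) (by omega) (by omega) ?_ ?_
      (fun w => ?_) ?_ ?_
    · simp only [Finset.mem_Icc, Finset.mem_insert]; omega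
    · simp only [Finset.mem_Icc]; omega
    · simp only [Finset.mem_Icc, Finset.mem_insert, lexGraph_adj, true_and]; omega
    · refine (pdLE_gIdeal_of_edgeless (fun w hw => ?_) fun i hi j hj => ?_).mono
        ((Finset.card_union_le _ _).trans ?_)
      · simp only [Finset.mem_Icc, Finset.mem_union] at hw
        omega
      · simp only [Finset.mem_Icc, Finset.mem_sdiff, Finset.mem_erase, Finset.mem_insert,
          lexGraph_adj, ne_eq] at hi hj ⊢
        omega
      · rw [Nat.card_Icc, Nat.card_Icc]; omega
    · refine pdLE_gIdeal_star (v := a) (N := Finset.Icc b n) (fun w hw => ?_)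
        (fun w hw => ?_) ?_ (fun w => ?_) ?_ ?_ ?_
      · simp only [Finset.mem_Icc, Finset.mem_erase, Finset.mem_insert, ne_eq] at hw ⊢
        omega
      · simp only [Finset.mem_Icc, Finset.mem_insert] at hw
        omega
      · simp only [Finset.mem_Icc, Finset.mem_erase, Finset.mem_insert, true_or, and_true, ne_eq]
        omega
      · simp only [Finset.mem_Icc, Finset.mem_erase, Finset.mem_insert, lexGraph_adj, true_and, ne_eq]
        omega
      · intro i hi j hj
        simp only [Finset.mem_Icc, Finset.mem_erase, Finset.mem_insert, lexGraph_adj, ne_eq] at hi hj ⊢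
        omega
      · have := Finset.card_insert_le c (Finset.Icc (a + 1) (c - 1))
        rw [Nat.card_Icc] at this; omega
      · have := Finset.card_insert_le c (Finset.Icc (a + 1) (c - 1))
        rw [Nat.card_Icc] at this ⊢; omega

/-- The vertices `a + 1, …, c - 1` are deleted one after the other. The deleted vertex `m` is adjacent
to all of `m + 1, …, n`, so that its colon ideal is generated by the variables
`a + 1, …, n` other than `m`. -/
theorem pdLE_gap (ha : 1 ≤ a) (hac : a < c) (hcb : c < b) (hb : b ≤ n) (hcd : c < d) (hd : d ≤ n)
    (hbd : d < n ∨ c + 2 ≤ b) : PdLE (lexSegIdeal K n (a, b) (c, d)) (n - a - 1) := by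
  have key : ∀ m, m ≤ c → a + 1 ≤ m → PdLE (gIdeal K n (lexGraph n a b c d)
      (insert a (Finset.Icc m n)) (Finset.Icc (a + 1) (m - 1))) (n - a - 1) := by
    intro m hm
    induction hm using Nat.decreasingInduction with
    | self => exact fun _ => pdLE_base ha hac hcb hb hcd hd hbd
    | of_succ m hm ih =>
      intro ham
      refine pdLE_gIdeal_step (v := m) (N := Finset.Icc (m + 1) n) (by omega) (by omega) ?_ ?_
        (fun w => ?_) ?_ ?_
      · simp only [Finset.mem_Icc, Finset.mem_insert]; omega
      · simp only [Finset.mem_Icc]; omega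
      · simp only [Finset.mem_Icc, Finset.mem_insert, lexGraph_adj]; omega
      · refine (pdLE_gIdeal_of_edgeless (fun w hw => ?_) fun i hi j hj => ?_).mono
          ((Finset.card_union_le _ _).trans ?_)
        · simp only [Finset.mem_Icc, Finset.mem_union] at hw
          omega
        · simp only [Finset.mem_Icc, Finset.mem_sdiff, Finset.mem_erase, Finset.mem_insert,
            lexGraph_adj, ne_eq] at hi hj ⊢
          omega
        · rw [Nat.card_Icc, Nat.card_Icc]; omega
      · convert ih (by omega) using 2
        · ext w
          simp only [Finset.mem_Icc, Finset.mem_erase, Finset.mem_insert, ne_eq]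
          omega
        · ext w
          simp only [Finset.mem_Icc, Finset.mem_insert]
          omega
  rw [lexSegIdeal_eq_gIdeal]
  convert key (a + 1) (by omega) le_rfl using 2
  · ext w
    simp only [Finset.mem_Icc, Finset.mem_insert]
    omega
  · simp
end PdUpper

/-! ### Comparison of the bounds -/

section Assembly

/-- Torsion resolutions arise both from projective resolutions and from generators up to radical, so
one lower bound on their length serves for both invariants. -/
theorem ara_eq_projDim_of_bounds {R : Type} [CommRing R] {I : Ideal R} {N : ℕ}
    (hgen : ∃ f : Fin N → R, (∀ t, f t ∈ I) ∧ (Ideal.span (Set.range f)).radical = I.radical)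
    (hpd : PdLE I N) (hlow : ∀ r, TorsionRes I r → N ≤ r) :
    ara I = projDim (ModuleCat.of R (R ⧸ I)) := by
  have h1 : ara I = N := by
    refine le_antisymm (Nat.sInf_le hgen) (le_csInf ⟨N, hgen⟩ ?_)
    rintro r ⟨f, hf, hrad⟩
    obtain ⟨C⟩ := exists_torsionRes_of_radical f hf hrad
    exact hlow r C
  have hres := exists_res N _ hpd
  have h2 : projDim (ModuleCat.of R (R ⧸ I)) = N := by
    refine le_antisymm (Nat.sInf_le hres) (le_csInf ⟨N, hres⟩ ?_)
    rintro r ⟨P, hP⟩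
    obtain ⟨C⟩ := exists_torsionRes_of_resolution I r P hP
    exact hlow r C
  rw [h1, h2]

variable {K : Type} [Field K] {n a b c d r : ℕ}

theorem low_star (C : TorsionRes (lexSegIdeal K n (a, b) (a, d)) r) (ha : 1 ≤ a) (hab : a < b)
    (hbd : b ≤ d) (hd : d ≤ n) : d - b + 1 ≤ r := by
  have h := card_le_of_independent (S := lexSegSet n (a, b) (a, d)) C (fun w hw => hw.1) {a}
    (Finset.Icc b d) (fun i hi => ?_) (fun i hi => ?_) (fun i hi j hj => ?_) fun j hj => ?_
  · rw [Nat.card_Icc] at h; omega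
  · rw [Finset.mem_singleton] at hi; omega
  · rw [Finset.mem_Icc] at hi; omega
  · rw [Finset.mem_singleton] at hi hj
    rw [mem_lexSegSet]; omega
  · rw [Finset.mem_Icc] at hj
    refine ⟨a, Finset.mem_singleton_self _, Or.inl (mem_lexSegSet.2 ?_)⟩; omega

theorem low_double (C : TorsionRes (lexSegIdeal K n (a, b) (a + 1, d)) r) (ha : 1 ≤ a)
    (hcd : a + 1 < d) (hdb : d < b) (hb : b ≤ n) : (n - b + 1) + (d - (a + 1)) ≤ r := by
  have h := card_le_of_independent (S := lexSegSet n (a, b) (a + 1, d)) C (fun w hw => hw.1)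
    {a, a + 1} (Finset.Icc b n ∪ Finset.Icc (a + 2) d) (fun i hi => ?_) (fun i hi => ?_)
    (fun i hi j hj => ?_) fun j hj => ?_
  · rw [Finset.card_union_of_disjoint (Finset.disjoint_left.2 fun w h1 h2 => ?_), Nat.card_Icc,
      Nat.card_Icc] at h
    · omega
    · rw [Finset.mem_Icc] at h1 h2; omega
  · rw [Finset.mem_insert, Finset.mem_singleton] at hi; omega
  · rw [Finset.mem_union, Finset.mem_Icc, Finset.mem_Icc] at hi; omega
  · rw [Finset.mem_insert, Finset.mem_singleton] at hi hj
    rw [mem_lexSegSet]; omega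
  · rw [Finset.mem_union, Finset.mem_Icc, Finset.mem_Icc] at hj
    rcases hj with hj | hj
    · refine ⟨a, by simp, Or.inl (mem_lexSegSet.2 ?_)⟩; omega
    · refine ⟨a + 1, by simp, Or.inl (mem_lexSegSet.2 ?_)⟩; omega

theorem low_gap (C : TorsionRes (lexSegIdeal K n (a, b) (c, d)) r) (ha : 1 ≤ a)
    (hac : a < c) (hcb : c < b) (hb : b ≤ n)
    (hbd : c = a + 1 → b ≤ d) : n - a - 1 ≤ r := by
  have h := card_le_of_independent (S := lexSegSet n (a, b) (c, d)) C (fun w hw => hw.1)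
    {a, a + 1} (Finset.Icc (a + 2) n) (fun i hi => ?_) (fun i hi => ?_)
    (fun i hi j hj => ?_) fun j hj => ?_
  · rw [Nat.card_Icc] at h; omega
  · rw [Finset.mem_insert, Finset.mem_singleton] at hi; omega
  · rw [Finset.mem_Icc] at hi; omega
  · rw [Finset.mem_insert, Finset.mem_singleton] at hi hj
    rw [mem_lexSegSet]; omega
  · rw [Finset.mem_Icc] at hj
    rcases Nat.lt_or_ge j b with hjb | hjb
    · refine ⟨a + 1, by simp, Or.inl (mem_lexSegSet.2 ?_)⟩; omega
    · refine ⟨a, by simp, Or.inl (mem_lexSegSet.2 ?_)⟩; omega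

theorem low_join {k : ℕ} (C : TorsionRes (lexSegIdeal K n (a, b) (c, d)) r) (ha : 1 ≤ a)
    (hac : a < c) (hcd : c < d) (hd : d ≤ n)
    (hk : k = c - 1 ∧ b ≤ c ∨ k = c ∧ b = c + 1 ∧ d = n) : n - a ≤ r := by
  have h := card_le_of_join (S := lexSegSet n (a, b) (c, d)) C (fun w hw => hw.1)
    (Finset.Icc a k) (Finset.Icc a n) (fun i hi => ?_) (v := a) (w := n) ?_ ?_ ?_ ?_
    fun i hi j hj hik hjk => ?_
  · rw [Nat.card_Icc] at h; omega
  · rw [Finset.mem_Icc] at hi; omega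
  · rw [Finset.mem_Icc]; omega
  · rw [Finset.mem_Icc]; omega
  · rw [Finset.mem_Icc]; omega
  · rw [Finset.mem_Icc]; omega
  · rw [Finset.mem_Icc] at hi hj hik hjk
    refine Or.inl (mem_lexSegSet.2 ?_); omega

end Assembly

/-- For any lexsegment edge ideal `I = (L(u,v))` of
`S = K[x_1,…,x_n]`, the arithmetical rank of `I` equals the projective
dimension of `S/I` over `S`. -/
theorem lexSegIdeal_ara_eq_projDim (K : Type) [Field K] (n : ℕ) (u v : ℕ × ℕ)
    (hu : validPair n u) (hv : validPair n v) (huv : lexGE u v) :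
    ara (lexSegIdeal K n u v) =
      projDim (ModuleCat.of (MvPolynomial (Fin n) K)
        (MvPolynomial (Fin n) K ⧸ lexSegIdeal K n u v)) := by
  obtain ⟨a, b⟩ := u
  obtain ⟨c, d⟩ := v
  obtain ⟨ha, hab, hb⟩ := hu
  obtain ⟨-, hcd, hd⟩ := hv
  simp only [lexGE] at ha hab hb hcd hd huv
  rcases huv with hac | ⟨rfl, hbd⟩
  · rcases Nat.lt_or_ge c b with hcb | hcb
    · by_cases hD : c = a + 1 ∧ d < b
      · -- Two disjoint stars, at `a` and at `a + 1`.
        obtain ⟨rfl, hdb⟩ := hD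
        exact ara_eq_projDim_of_bounds (generators_double hcd hb) (pdLE_double ha hb hcd hdb)
          fun r C => low_double C ha hcd hdb hb
      · by_cases hJ : b = c + 1 ∧ d = n
        · -- `a, …, c` is completely joined to `c + 1, …, n`.
          have hk : c = c - 1 ∧ b ≤ c ∨ c = c ∧ b = c + 1 ∧ d = n := Or.inr ⟨rfl, hJ⟩
          exact ara_eq_projDim_of_bounds (generators_join hac hab hk hcd hd ha)
            (pdLE_join ha (by omega)) fun r C => low_join C ha hac hcd hd hk
        · refine ara_eq_projDim_of_bounds (N := n - a - 1) ?_
            (pdLE_gap ha hac hcb hb hcd hd (by omega))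
            fun r C => low_gap C ha hac hcb hb (by omega)
          rcases Nat.lt_or_ge d n with hdn | hdn
          · exact generators_of_lt hac hcb hdn hcd
          · obtain rfl : d = n := le_antisymm hd hdn
            exact generators_of_eq hac (by omega) hb
    · -- `a, …, c - 1` is completely joined to `c, …, n`.
      have hk : c - 1 = c - 1 ∧ b ≤ c ∨ c - 1 = c ∧ b = c + 1 ∧ d = n := Or.inl ⟨rfl, hcb⟩
      exact ara_eq_projDim_of_bounds (generators_join hac hab hk hcd hd ha)
        (pdLE_join ha (by omega)) fun r C => low_join C ha hac hcd hd hk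
  · -- A star at `a`.
    exact ara_eq_projDim_of_bounds generators_star (pdLE_star ha hab hbd hd)
      fun r C => low_star C ha hab hbd hd
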